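/- (Elliptic beta integral) Let p, q be complex numbers with 0 < |p| < 1, 0 < |q| < 1, and let t₁,…,t₆ be nonzero complex numbers with |tⱼ| < 1 for all j and t₁t₂t₃t₄t₅t₆ = pq. Then ((p;p)_∞(q;q)_∞/(4πi)) ∮_{|z|=1} [∏_{j=1}^{6} Γ(tⱼz;p,q)Γ(tⱼz^{−1};p,q)] / [Γ(z²;p,q)Γ(z^{−2};p,q)] dz/z = ∏_{1≤j<k≤6} Γ(tⱼt_k;p,q), where the integral is over the positively oriented unit circle. -/

import Mathlib

open Complex Real Filter Topology

/-- The infinite q-Pochhammer symbol (z;q)_inf. -/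
noncomputable def qpoch (z q : ℂ) : ℂ := ∏' j : ℕ, (1 - z * q ^ j)

/-- The elliptic gamma function Γ(z;p,q). -/
noncomputable def egamma (z p q : ℂ) : ℂ :=
  ∏' jk : ℕ × ℕ, (1 - z⁻¹ * p ^ (jk.1 + 1) * q ^ (jk.2 + 1)) / (1 - z * p ^ jk.1 * q ^ jk.2)

/-- The short Jacobi theta function θ(z;p) (base first argument). -/
noncomputable def theta (p z : ℂ) : ℂ := qpoch z p * qpoch (p * z⁻¹) p

/-- The constant κ = (p;p)_∞ (q;q)_∞ / (4πi). -/
noncomputable def kappa (p q : ℂ) : ℂ := qpoch p p * qpoch q q / (4 * (Real.pi : ℂ) * Complex.I)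

/-- The double product `∏ (1 - z p^j q^k)`. -/
noncomputable def PP (p q z : ℂ) : ℂ := ∏' jk : ℕ × ℕ, (1 - z * p ^ jk.1 * q ^ jk.2)

lemma summable_dbl {p q : ℂ} (hp1 : ‖p‖ < 1) (hq1 : ‖q‖ < 1) (z : ℂ) :
    Summable (fun jk : ℕ × ℕ => ‖-(z * p ^ jk.1 * q ^ jk.2)‖) := by
  have h1 := summable_geometric_of_lt_one (norm_nonneg p) hp1
  have h2 := summable_geometric_of_lt_one (norm_nonneg q) hq1
  have := (Summable.mul_of_nonneg h1 h2 (fun _ => by positivity) (fun _ => by positivity)).mul_left ‖z‖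
  refine this.congr fun jk => ?_
  simp [norm_pow, mul_assoc]

lemma summable_sgl {p : ℂ} (hp1 : ‖p‖ < 1) (z : ℂ) :
    Summable (fun j : ℕ => ‖-(z * p ^ j)‖) := by
  have h1 := (summable_geometric_of_lt_one (norm_nonneg p) hp1).mul_left ‖z‖
  refine h1.congr fun jk => ?_
  simp [norm_pow]

lemma mult_dbl {p q : ℂ} (hp1 : ‖p‖ < 1) (hq1 : ‖q‖ < 1) (z : ℂ) :
    Multipliable (fun jk : ℕ × ℕ => (1 - z * p ^ jk.1 * q ^ jk.2)) := by
  simpa [sub_eq_add_neg] using multipliable_one_add_of_summable (summable_dbl hp1 hq1 z)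

lemma mult_sgl {p : ℂ} (hp1 : ‖p‖ < 1) (z : ℂ) :
    Multipliable (fun j : ℕ => (1 - z * p ^ j)) := by
  simpa [sub_eq_add_neg] using multipliable_one_add_of_summable (summable_sgl hp1 z)

lemma norm_pow_le_one' {p : ℂ} (hp1 : ‖p‖ < 1) (n : ℕ) : ‖p ^ n‖ ≤ 1 := by
  rw [norm_pow]; exact pow_le_one₀ (norm_nonneg _) hp1.le

lemma one_sub_ne_zero_of_norm {w : ℂ} (h : ‖w‖ < 1) : 1 - w ≠ 0 := by
  intro h0
  have : w = 1 := by linear_combination -h0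
  rw [this] at h; simp at h

lemma PP_ne_zero {p q : ℂ} (hp1 : ‖p‖ < 1) (hq1 : ‖q‖ < 1) {z : ℂ} (hz : ‖z‖ < 1) :
    PP p q z ≠ 0 := by
  unfold PP
  simp_rw [sub_eq_add_neg]
  apply tprod_one_add_ne_zero_of_summable _ (summable_dbl hp1 hq1 z)
  intro jk
  rw [← sub_eq_add_neg]
  apply one_sub_ne_zero_of_norm
  rw [norm_mul, norm_mul]
  calc ‖z‖ * ‖p ^ jk.1‖ * ‖q ^ jk.2‖ ≤ ‖z‖ * 1 * 1 := by
        gcongr <;> apply norm_pow_le_one' <;> assumption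
    _ < 1 := by simpa using hz

lemma qpoch_ne_zero {p : ℂ} (hp1 : ‖p‖ < 1) {z : ℂ} (hz : ‖z‖ < 1) :
    qpoch z p ≠ 0 := by
  unfold qpoch
  simp_rw [sub_eq_add_neg]
  apply tprod_one_add_ne_zero_of_summable _ (summable_sgl hp1 z)
  intro jk
  rw [← sub_eq_add_neg]
  apply one_sub_ne_zero_of_norm
  rw [norm_mul]
  calc ‖z‖ * ‖p ^ jk‖ ≤ ‖z‖ * 1 := by
        gcongr; apply norm_pow_le_one' ; assumption
    _ < 1 := by simpa using hz

lemma egamma_eq {p q : ℂ} (hp1 : ‖p‖ < 1) (hq1 : ‖q‖ < 1) (z : ℂ) :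
    egamma z p q = PP p q (p * q * z⁻¹) / PP p q z := by
  unfold egamma
  by_cases h : ∃ jk : ℕ × ℕ, 1 - z * p ^ jk.1 * q ^ jk.2 = 0
  · obtain ⟨jk, h⟩ := h
    rw [tprod_of_exists_eq_zero ⟨jk, by rw [h, div_zero]⟩]
    have : PP p q z = 0 := tprod_of_exists_eq_zero ⟨jk, h⟩
    rw [this, div_zero]
  · push Not at h
    have hne : PP p q z ≠ 0 := by
      unfold PP
      simp_rw [sub_eq_add_neg]
      apply tprod_one_add_ne_zero_of_summable _ (summable_dbl hp1 hq1 z)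
      intro jk
      rw [← sub_eq_add_neg]
      exact h jk
    have := (mult_dbl hp1 hq1 (p * q * z⁻¹)).tprod_div₀ (mult_dbl hp1 hq1 z) hne
    unfold PP
    rw [← this]
    congr 1; funext jk
    rw [show (1 - z⁻¹ * p ^ (jk.1 + 1) * q ^ (jk.2 + 1))
      = 1 - p * q * z⁻¹ * p ^ jk.1 * q ^ jk.2 by ring]

lemma PP_comm (p q z : ℂ) : PP p q z = PP q p z := by
  unfold PP
  rw [← (Equiv.prodComm ℕ ℕ).tprod_eq]
  congr 1; funext jk; simp; ring

lemma PP_left {p q : ℂ} (hp1 : ‖p‖ < 1) (hq1 : ‖q‖ < 1) (z : ℂ) :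
    PP p q z = qpoch z q * PP p q (p * z) := by
  have hr (w : ℂ) : PP p q w = ∏' j : ℕ, qpoch (w * p ^ j) q := by
    unfold PP qpoch
    exact (mult_dbl hp1 hq1 w).tprod_prod' (fun j => mult_sgl hq1 (w * p ^ j))
  rw [hr, hr, tprod_eq_zero_mul']
  · simp only [pow_zero, mul_one]
    congr 2; funext j; congr 1; ring
  · have h2 : Multipliable (fun j : ℕ => qpoch ((p * z) * p ^ j) q) :=
      (((mult_dbl hp1 hq1 (p*z)).hasProd.prod_fiberwise
        (fun j => (mult_sgl hq1 ((p*z) * p ^ j)).hasProd))).multipliable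
    convert h2 using 2
    congr 1; ring

lemma PP_right {p q : ℂ} (hp1 : ‖p‖ < 1) (hq1 : ‖q‖ < 1) (z : ℂ) :
    PP p q z = qpoch z p * PP p q (q * z) := by
  rw [PP_comm, PP_left hq1 hp1, PP_comm]

lemma qpoch_succ {p : ℂ} (hp1 : ‖p‖ < 1) (z : ℂ) :
    qpoch z p = (1 - z) * qpoch (p * z) p := by
  unfold qpoch
  rw [tprod_eq_zero_mul']
  · simp only [pow_zero, mul_one]
    congr 2; funext j; ring
  · convert mult_sgl hp1 (p * z) using 2
    ring

lemma differentiable_PP {p q : ℂ} (hp1 : ‖p‖ < 1) (hq1 : ‖q‖ < 1) :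
    Differentiable ℂ (PP p q) := by
  have key : HasProdLocallyUniformlyOn (fun (jk : ℕ × ℕ) z => 1 + -(z * p ^ jk.1 * q ^ jk.2))
      (fun z => ∏' jk : ℕ × ℕ, (1 + -(z * p ^ jk.1 * q ^ jk.2))) Set.univ := by
    apply hasProdLocallyUniformlyOn_of_forall_compact isOpen_univ
    intro K _ hK
    obtain ⟨C, hC⟩ := hK.exists_bound_of_continuousOn (f := fun z : ℂ => z) continuousOn_id
    refine (summable_dbl hp1 hq1 (C : ℂ)).hasProdUniformlyOn_one_add hK
      (.of_forall fun jk z hz => ?_) (fun _ => by fun_prop)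
    simp only [norm_neg, norm_mul]
    gcongr
    refine (hC z hz).trans ?_
    simpa using le_abs_self C
  have := key.differentiableOn
    (.of_forall fun _ ↦ by simpa [Finset.prod_fn] using
      DifferentiableOn.finsetProd (fun _ _ ↦ by fun_prop)) isOpen_univ
  rw [differentiableOn_univ] at this
  have e : PP p q = fun z => ∏' jk : ℕ × ℕ, (1 + -(z * p ^ jk.1 * q ^ jk.2)) := by
    funext z; simp only [PP, sub_eq_add_neg]
  rw [e]; exact this

lemma differentiable_qpoch {p : ℂ} (hp1 : ‖p‖ < 1) :
    Differentiable ℂ (fun z => qpoch z p) := by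
  have key : HasProdLocallyUniformlyOn (fun (j : ℕ) (z : ℂ) => 1 + -(z * p ^ j))
      (fun z => ∏' j : ℕ, (1 + -(z * p ^ j))) Set.univ := by
    apply hasProdLocallyUniformlyOn_of_forall_compact isOpen_univ
    intro K _ hK
    obtain ⟨C, hC⟩ := hK.exists_bound_of_continuousOn (f := fun z : ℂ => z) continuousOn_id
    refine (summable_sgl hp1 (C : ℂ)).hasProdUniformlyOn_one_add hK
      (.of_forall fun jk z hz => ?_) (fun _ => by fun_prop)
    simp only [norm_neg, norm_mul]
    gcongr
    refine (hC z hz).trans ?_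
    simpa using le_abs_self C
  have := key.differentiableOn
    (.of_forall fun _ ↦ by simpa [Finset.prod_fn] using
      DifferentiableOn.finsetProd (fun _ _ ↦ by fun_prop)) isOpen_univ
  rw [differentiableOn_univ] at this
  have e : (fun z => qpoch z p) = fun z => ∏' j : ℕ, (1 + -(z * p ^ j)) := by
    funext z; simp only [qpoch, sub_eq_add_neg]
  rw [e]; exact this

lemma theta_inv {p : ℂ} (hp1 : ‖p‖ < 1) {z : ℂ} (hz : z ≠ 0) :
    theta p z⁻¹ = -theta p z / z := by
  unfold theta
  rw [inv_inv, qpoch_succ hp1 z, qpoch_succ hp1 z⁻¹]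
  field_simp
  ring

lemma theta_pdiv {p : ℂ} (hp0 : p ≠ 0) (z : ℂ) :
    theta p (p / z) = theta p z := by
  unfold theta
  rw [inv_div, mul_comm]
  congr 2
  field_simp

lemma theta_pmul {p : ℂ} (hp0 : p ≠ 0) (hp1 : ‖p‖ < 1) {z : ℂ} (hz : z ≠ 0) :
    theta p (p * z) = -theta p z / z := by
  rw [← theta_inv hp1 hz, ← theta_pdiv hp0 z⁻¹]
  simp

lemma theta_one {p : ℂ} (hp1 : ‖p‖ < 1) : theta p 1 = 0 := by
  unfold theta
  rw [qpoch_succ hp1]; simp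

lemma theta_ne_zero {p : ℂ} (hp1 : ‖p‖ < 1) {z : ℂ} (h1 : ‖p‖ < ‖z‖) (h2 : ‖z‖ < 1) :
    theta p z ≠ 0 := by
  unfold theta
  refine mul_ne_zero (qpoch_ne_zero hp1 h2) (qpoch_ne_zero hp1 ?_)
  have : 0 < ‖z‖ := (norm_nonneg p).trans_lt h1
  rw [norm_mul, norm_inv, ← div_eq_mul_inv, div_lt_one this]
  exact h1

lemma differentiableAt_theta {p : ℂ} (hp1 : ‖p‖ < 1) {z : ℂ} (hz : z ≠ 0) :
    DifferentiableAt ℂ (theta p) z := by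
  unfold theta
  refine DifferentiableAt.mul (differentiable_qpoch hp1 _) ?_
  exact DifferentiableAt.comp z (differentiable_qpoch hp1 _)
    ((differentiableAt_inv hz).const_mul p)

/-- The elliptic gamma function as a quotient. -/
noncomputable def Gm (p q z : ℂ) : ℂ := PP p q (p * q * z⁻¹) / PP p q z

lemma Gm_q {p q : ℂ} (hp1 : ‖p‖ < 1) (hq0 : q ≠ 0) (hq1 : ‖q‖ < 1) {z : ℂ}
    (hz : qpoch z p ≠ 0) : Gm p q (q * z) = theta p z * Gm p q z := by
  unfold Gm theta
  have e : p * q * (q * z)⁻¹ = p * z⁻¹ := by field_simp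
  rw [e, PP_right hp1 hq1 (p * z⁻¹), PP_right hp1 hq1 z]
  have e2 : q * (p * z⁻¹) = p * q * z⁻¹ := by ring
  rw [e2]
  by_cases h : PP p q (q * z) = 0
  · simp [h]
  · field_simp

lemma Gm_ne_zero {p q : ℂ} (hp1 : ‖p‖ < 1) (hq1 : ‖q‖ < 1) {z : ℂ}
    (h1 : ‖p * q‖ < ‖z‖) (h2 : ‖z‖ < 1) : Gm p q z ≠ 0 := by
  unfold Gm
  refine div_ne_zero (PP_ne_zero hp1 hq1 ?_) (PP_ne_zero hp1 hq1 h2)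
  have : 0 < ‖z‖ := (norm_nonneg _).trans_lt h1
  rw [norm_mul, norm_inv, ← div_eq_mul_inv, div_lt_one this]
  exact h1

lemma Gm_refl {p q : ℂ} (hp0 : p ≠ 0) (hq0 : q ≠ 0) (hp1 : ‖p‖ < 1) (hq1 : ‖q‖ < 1) {z w : ℂ}
    (h : z * w = p * q) (h1 : ‖z‖ < 1) (h2 : ‖w‖ < 1) : Gm p q z * Gm p q w = 1 := by
  have hz : z ≠ 0 := by rintro rfl; simp at h; tauto
  have hw : w ≠ 0 := by rintro rfl; simp at h; tauto
  unfold Gm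
  rw [← h]
  have e1 : z * w * z⁻¹ = w := by field_simp
  have e2 : z * w * w⁻¹ = z := by field_simp
  rw [e1, e2]
  have := PP_ne_zero hp1 hq1 h1
  have := PP_ne_zero hp1 hq1 h2
  field_simp

lemma differentiableAt_Gm {p q : ℂ} (hp1 : ‖p‖ < 1) (hq1 : ‖q‖ < 1) {z : ℂ} (hz : z ≠ 0)
    (h1 : ‖z‖ < 1) : DifferentiableAt ℂ (Gm p q) z := by
  unfold Gm
  refine DifferentiableAt.div ?_ (differentiable_PP hp1 hq1 _) (PP_ne_zero hp1 hq1 h1)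
  exact DifferentiableAt.comp z (differentiable_PP hp1 hq1 _)
    ((differentiableAt_inv hz).const_mul (p * q))

lemma inv_Gm_Gm {p q : ℂ} (hp1 : ‖p‖ < 1) (hq1 : ‖q‖ < 1) {x : ℂ}
    (h1 : ‖x‖ = 1) : 1 / (Gm p q x * Gm p q x⁻¹) = theta p x * theta q x⁻¹ := by
  unfold Gm theta
  rw [inv_inv]
  have a1 : ‖p * q * x‖ < 1 := by
    rw [norm_mul, norm_mul, h1, mul_one]
    exact mul_lt_one_of_nonneg_of_lt_one_left (norm_nonneg _) hp1 hq1.le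
  have a2 : ‖p * q * x⁻¹‖ < 1 := by
    rw [norm_mul, norm_mul, norm_inv, h1, inv_one, mul_one]
    exact mul_lt_one_of_nonneg_of_lt_one_left (norm_nonneg _) hp1 hq1.le
  have b1 := PP_ne_zero hp1 hq1 a1
  have b2 := PP_ne_zero hp1 hq1 a2
  have c1 : PP p q x = qpoch x p * (qpoch (q * x) q * PP p q (p * q * x)) := by
    rw [PP_right hp1 hq1 x, PP_left hp1 hq1 (q * x), mul_assoc]
  have c2 : PP p q x⁻¹ = qpoch x⁻¹ q * (qpoch (p * x⁻¹) p * PP p q (p * q * x⁻¹)) := by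
    rw [PP_left hp1 hq1 x⁻¹, PP_right hp1 hq1 (p * x⁻¹)]
    congr 3; ring
  rw [one_div, mul_inv, inv_div, inv_div, c1, c2]
  generalize PP p q (p * q * x) = X at *
  generalize PP p q (p * q * x⁻¹) = Y at *
  generalize qpoch x⁻¹ q = U at *
  generalize qpoch (p * x⁻¹) p = V at *
  field_simp

open Set MeasureTheory in
lemma integral_rotate (G : ℂ → ℂ) (a : ℂ) :
    ∫ u in (0:ℝ)..(2 * Real.pi), G (a * Complex.exp (u * Complex.I))
      = ∫ u in (0:ℝ)..(2 * Real.pi), G (‖a‖ * Complex.exp (u * Complex.I)) := by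
  have hper : Function.Periodic (fun u : ℝ => G (‖a‖ * Complex.exp (u * Complex.I)))
      (2 * Real.pi) := by
    intro u
    simp only
    congr 2
    push_cast
    rw [add_mul, Complex.exp_periodic]
  have h1 : ∀ u : ℝ, G (a * Complex.exp (u * Complex.I))
      = (fun u : ℝ => G (‖a‖ * Complex.exp (u * Complex.I))) (u + Complex.arg a) := by
    intro u
    simp only
    congr 1
    conv_lhs => rw [← Complex.norm_mul_exp_arg_mul_I a]
    push_cast
    rw [add_mul, Complex.exp_add]; ring
  simp_rw [h1]
  rw [intervalIntegral.integral_comp_add_right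
    (fun u : ℝ => G (‖a‖ * Complex.exp (u * Complex.I)))]
  have := hper.intervalIntegral_add_eq (0 + Complex.arg a) 0
  rw [zero_add, zero_add] at this
  rw [zero_add, add_comm (2 * Real.pi)]
  exact this

open Set MeasureTheory in
lemma integral_shift (G : ℂ → ℂ) {a b : ℂ} (hb : b ≠ 0) (hab : ‖b‖ ≤ ‖a‖)
    (hG : ∀ z, ‖b‖ ≤ ‖z‖ → ‖z‖ ≤ ‖a‖ → DifferentiableAt ℂ G z) :
    ∫ u in (0:ℝ)..(2 * Real.pi), G (a * Complex.exp (u * Complex.I))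
      = ∫ u in (0:ℝ)..(2 * Real.pi), G (b * Complex.exp (u * Complex.I)) := by
  rw [integral_rotate G a, integral_rotate G b]
  have hb' : 0 < ‖b‖ := norm_pos_iff.2 hb
  have hc (z : ℂ) (hz : ‖b‖ ≤ ‖z‖) : z ≠ 0 := norm_pos_iff.1 (hb'.trans_le hz)
  have key := Complex.circleIntegral_eq_of_differentiable_on_annulus_off_countable
    (c := 0) hb' hab (f := fun z => z⁻¹ * G z) (s := ∅) countable_empty
    (by
      intro z hz
      simp only [Set.mem_sdiff, Metric.mem_closedBall, dist_zero_right, Metric.mem_ball, not_lt] at hz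
      exact ((differentiableAt_inv (hc z hz.2)).mul (hG z hz.2 hz.1)).continuousAt.continuousWithinAt)
    (by
      intro z hz
      simp only [Set.mem_sdiff, Metric.mem_closedBall, dist_zero_right, Metric.mem_ball, not_le,
        mem_empty_iff_false, not_false_eq_true, and_true] at hz
      exact ((differentiableAt_inv (hc z hz.2.le)).mul (hG z hz.2.le hz.1.le)))
  have conv (R : ℝ) (hR : 0 < R) : (∮ z in C(0, R), z⁻¹ * G z)
      = Complex.I * ∫ u in (0:ℝ)..(2 * Real.pi), G (R * Complex.exp (u * Complex.I)) := by
    rw [circleIntegral, ← intervalIntegral.integral_const_mul]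
    congr 1; funext u
    simp only [deriv_circleMap, circleMap, zero_add, smul_eq_mul]
    have : (R : ℂ) ≠ 0 := by exact_mod_cast hR.ne'
    have h2 := Complex.exp_ne_zero (u * Complex.I)
    field_simp
  rw [conv _ hb', conv _ (hb'.trans_le hab)] at key
  exact mul_left_cancel₀ Complex.I_ne_zero key

lemma fourier_unique (f : ℝ → ℂ) (hf : Continuous f) (hper : Function.Periodic f (2 * Real.pi))
    (h : ∀ n : ℤ, ∫ u in (0:ℝ)..(2 * Real.pi), f u * Complex.exp (u * Complex.I) ^ n = 0) (x : ℝ) :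
    f x = 0 := by
  have : Fact (0 < 2 * Real.pi) := ⟨by positivity⟩
  let F : C(AddCircle (2 * Real.pi), ℂ) := ⟨hper.lift, hf.quotient_lift _⟩
  have hF (u : ℝ) : F (u : AddCircle (2 * Real.pi)) = f u := hper.lift_coe u
  have hz : fourierCoeff F = 0 := by
    funext n
    rw [fourierCoeff_eq_intervalIntegral F n 0]
    have := h (-n)
    simp only [zero_add, Pi.zero_apply, smul_eq_zero]
    right
    rw [← this]
    congr 1; funext u
    rw [hF, fourier_coe_apply, smul_eq_mul, mul_comm]
    congr 1
    rw [← Complex.exp_int_mul]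
    congr 1
    have : (Real.pi : ℂ) ≠ 0 := by exact_mod_cast Real.pi_ne_zero
    push_cast
    field_simp
  have hs : Summable (fourierCoeff F) := by rw [hz]; exact summable_zero
  have := has_pointwise_sum_fourier_series_of_summable hs (x : AddCircle (2 * Real.pi))
  rw [hz, hF] at this
  simp only [Pi.zero_apply, zero_smul] at this
  exact (hasSum_zero.unique this).symm

lemma isPreconnected_annulus (a b : ℝ) (ha : 0 ≤ a) :
    IsPreconnected {z : ℂ | a < ‖z‖ ∧ ‖z‖ < b} := by
  have hconv : Convex ℝ {w : ℂ | a < Real.exp w.re ∧ Real.exp w.re < b} := by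
    rcases ha.eq_or_lt with rfl | ha
    · rcases le_or_gt b 0 with hb | hb
      · have : {w : ℂ | 0 < Real.exp w.re ∧ Real.exp w.re < b} = ∅ := by
          ext w; simp; intro _; linarith [Real.exp_pos w.re]
        rw [this]; exact convex_empty
      · have : {w : ℂ | 0 < Real.exp w.re ∧ Real.exp w.re < b} = {w : ℂ | w.re < Real.log b} := by
          ext w; simp [Real.exp_pos, Real.lt_log_iff_exp_lt hb]
        rw [this]; exact convex_halfSpace_re_lt _
    · rcases le_or_gt b 0 with hb | hb
      · have : {w : ℂ | a < Real.exp w.re ∧ Real.exp w.re < b} = ∅ := by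
          ext w; simp; intro _; linarith [Real.exp_pos w.re]
        rw [this]; exact convex_empty
      · have : {w : ℂ | a < Real.exp w.re ∧ Real.exp w.re < b}
            = {w : ℂ | Real.log a < w.re} ∩ {w : ℂ | w.re < Real.log b} := by
          ext w; simp [Real.lt_log_iff_exp_lt hb, Real.log_lt_iff_lt_exp ha]
        rw [this]; exact (convex_halfSpace_re_gt _).inter (convex_halfSpace_re_lt _)
  have : {z : ℂ | a < ‖z‖ ∧ ‖z‖ < b}
      = Complex.exp '' {w : ℂ | a < Real.exp w.re ∧ Real.exp w.re < b} := by
    ext z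
    constructor
    · rintro ⟨h1, h2⟩
      have hz : z ≠ 0 := norm_pos_iff.1 (ha.trans_lt h1)
      refine ⟨Complex.log z, ?_, Complex.exp_log hz⟩
      simp only [Set.mem_ofPred_eq, ← Complex.norm_exp, Complex.exp_log hz]
      exact ⟨h1, h2⟩
    · rintro ⟨w, ⟨h1, h2⟩, rfl⟩
      simp only [Set.mem_ofPred_eq, Complex.norm_exp]
      exact ⟨h1, h2⟩
  rw [this]
  exact hconv.isPreconnected.image _ Complex.continuous_exp.continuousOn

lemma isOpen_annulus (a b : ℝ) : IsOpen {z : ℂ | a < ‖z‖ ∧ ‖z‖ < b} :=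
  (isOpen_lt continuous_const continuous_norm).inter (isOpen_lt continuous_norm continuous_const)

open MeasureTheory Set in
lemma differentiableOn_param (F : ℂ → ℝ → ℂ) {U : Set ℂ} (hU : IsOpen U) (T : ℝ)
    (hc : ContinuousOn (Function.uncurry F) (U ×ˢ univ))
    (hd : ∀ u, DifferentiableOn ℂ (fun x => F x u) U) :
    DifferentiableOn ℂ (fun x => ∫ u in (0:ℝ)..T, F x u) U := by
  intro x₀ hx₀
  obtain ⟨δ, hδ, hball⟩ := Metric.nhds_basis_closedBall.mem_iff.1 (hU.mem_nhds hx₀)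
  have hcu (x : ℂ) (hx : x ∈ U) : Continuous (F x) := by
    rw [← continuousOn_univ]
    exact hc.comp (f := fun u : ℝ => (x, u)) (by fun_prop) (fun u _ => ⟨hx, mem_univ _⟩)
  obtain ⟨M, hM⟩ := ((isCompact_closedBall x₀ δ).prod
    (isCompact_uIcc (a := (0:ℝ)) (b := T))).exists_bound_of_continuousOn
    (hc.mono (prod_mono hball (subset_univ _)))
  have hdb (u : ℝ) (x : ℂ) (hx : x ∈ U) : HasDerivAt (fun x => F x u) (deriv (fun x => F x u) x) x :=
    ((hd u).differentiableAt (hU.mem_nhds hx)).hasDerivAt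
  have hsub : Metric.ball x₀ (δ/2) ⊆ U :=
    (Metric.ball_subset_closedBall.trans (Metric.closedBall_subset_closedBall (by linarith))).trans hball
  have key := intervalIntegral.hasDerivAt_integral_of_dominated_loc_of_deriv_le (μ := volume)
    (a := 0) (b := T) (F := F)
    (F' := fun x u => deriv (fun x => F x u) x) (x₀ := x₀) (s := Metric.ball x₀ (δ / 2))
    (bound := fun _ => M / (δ / 2))
    (Metric.ball_mem_nhds _ (by positivity))
    (by
      filter_upwards [hU.mem_nhds hx₀] with x hx
      exact (hcu x hx).aestronglyMeasurable)
    ((hcu x₀ hx₀).intervalIntegrable _ _)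
    (by
      have hlim (u : ℝ) : Tendsto (fun n : ℕ => ((δ : ℂ) / ((n : ℂ) + 1))⁻¹ •
          (F (x₀ + (δ : ℂ) / ((n : ℂ) + 1)) u - F x₀ u)) atTop (𝓝 (deriv (fun x => F x u) x₀)) := by
        have h1 := (hasDerivAt_iff_tendsto_slope_zero.1 (hdb u x₀ hx₀))
        refine h1.comp (tendsto_nhdsWithin_iff.2 ⟨?_, ?_⟩)
        · have h2 := (tendsto_one_div_add_atTop_nhds_zero_nat (𝕜 := ℂ)).const_mul (δ : ℂ)
          simpa [div_eq_mul_inv] using h2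
        · refine .of_forall fun n => ?_
          have : (n : ℂ) + 1 ≠ 0 := by exact_mod_cast Nat.succ_ne_zero n
          have h3 : (δ : ℂ) ≠ 0 := by exact_mod_cast hδ.ne'
          simp [this, h3]
      refine aestronglyMeasurable_of_tendsto_ae atTop (f := fun (n : ℕ) (u : ℝ) =>
        ((δ : ℂ) / ((n : ℂ) + 1))⁻¹ • (F (x₀ + (δ : ℂ) / ((n : ℂ) + 1)) u - F x₀ u)) ?_
        (.of_forall fun u => hlim u)
      intro n
      have hmem : x₀ + (δ : ℂ) / ((n : ℂ) + 1) ∈ U := by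
        apply hball
        rw [Metric.mem_closedBall, dist_eq_norm, add_sub_cancel_left, norm_div]
        have e : ‖(n : ℂ) + 1‖ = (n : ℝ) + 1 := by
          exact_mod_cast Complex.norm_natCast (n + 1)
        rw [e, Complex.norm_real, Real.norm_of_nonneg hδ.le]
        apply div_le_self hδ.le
        have : (0:ℝ) ≤ n := Nat.cast_nonneg n
        linarith
      have hcc : Continuous (fun u : ℝ => ((δ : ℂ) / ((n : ℂ) + 1))⁻¹ •
          (F (x₀ + (δ : ℂ) / ((n : ℂ) + 1)) u - F x₀ u)) :=
        by
        have h1 := hcu _ hmem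
        have h2 := hcu _ hx₀
        exact (h1.sub h2).const_smul (((δ : ℂ) / ((n : ℂ) + 1))⁻¹)
      exact hcc.aestronglyMeasurable)
    (by
      refine .of_forall fun u hu x hx => ?_
      refine Complex.norm_deriv_le_of_forall_mem_sphere_norm_le (by positivity) ?_ ?_
      · refine DifferentiableOn.diffContOnCl ((hd u).mono ?_)
        refine Metric.closure_ball_subset_closedBall.trans (subset_trans ?_ hball)
        apply Metric.closedBall_subset_closedBall'
        rw [Metric.mem_ball] at hx; linarith
      · intro z hz
        refine hM (z, u) ⟨?_, uIoc_subset_uIcc hu⟩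
        rw [Metric.mem_ball] at hx
        rw [mem_sphere_iff_norm, ← dist_eq_norm] at hz
        rw [Metric.mem_closedBall]
        have := dist_triangle z x x₀
        linarith)
    intervalIntegrable_const
    (by
      refine .of_forall fun u _ x hx => hdb u x (hsub hx))
  exact key.2.differentiableAt.differentiableWithinAt

/-- Degree two theta functions whose zeroth and first Laurent coefficients vanish are zero. -/
lemma deg2_zero {p e : ℂ} (hp0 : p ≠ 0) (hp1 : ‖p‖ < 1) (he : e ≠ 0) (F : ℂ → ℂ)
    (hF : ∀ z, z ≠ 0 → DifferentiableAt ℂ F z)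
    (hq : ∀ z, z ≠ 0 → e * z ^ 2 * F (p * z) = F z)
    (h0 : ∫ u in (0:ℝ)..(2 * Real.pi), F (Complex.exp (u * Complex.I)) = 0)
    (h1 : ∫ u in (0:ℝ)..(2 * Real.pi), F (Complex.exp (u * Complex.I))
      * Complex.exp (u * Complex.I) = 0) :
    ∀ z, z ≠ 0 → F z = 0 := by
  have hd (n : ℤ) (z : ℂ) (hz : z ≠ 0) : DifferentiableAt ℂ (fun z => F z * z ^ n) z :=
    (hF z hz).mul (differentiableAt_zpow.2 (Or.inl hz))
  have hnz (b z : ℂ) (hb : b ≠ 0) (h : ‖b‖ ≤ ‖z‖) : z ≠ 0 :=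
    norm_pos_iff.1 ((norm_pos_iff.2 hb).trans_le h)
  have hsh (c : ℂ) (hc : c ≠ 0) (n : ℤ) :
      ∫ u in (0:ℝ)..(2 * Real.pi), F (c * Complex.exp (u * Complex.I))
        * (c * Complex.exp (u * Complex.I)) ^ n
      = ∫ u in (0:ℝ)..(2 * Real.pi), F (Complex.exp (u * Complex.I))
        * (Complex.exp (u * Complex.I)) ^ n := by
    rcases le_total ‖c‖ 1 with h | h
    · have := integral_shift (fun z => F z * z ^ n) (a := 1) (b := c) hc (by simpa using h)
        (fun z hz _ => hd n z (hnz c z hc hz))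
      simpa using this.symm
    · have := integral_shift (fun z => F z * z ^ n) (a := c) (b := 1) one_ne_zero (by simpa using h)
        (fun z hz _ => hd n z (hnz 1 z one_ne_zero hz))
      simpa using this
  set A : ℤ → ℂ := fun n => ∫ u in (0:ℝ)..(2 * Real.pi), F (Complex.exp (u * Complex.I))
        * (Complex.exp (u * Complex.I)) ^ n with hA
  have hrec (n : ℤ) : A (n + 2) = e⁻¹ * p ^ (n + 2) * A n := by
    have h := hsh p hp0 (n + 2)
    change _ = A (n + 2) at h
    rw [← h, hA, ← intervalIntegral.integral_const_mul]
    congr 1; funext u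
    have hx := Complex.exp_ne_zero (u * Complex.I)
    have := hq _ hx
    generalize Complex.exp (u * Complex.I) = w at *
    rw [mul_zpow, zpow_add₀ hx, ← this]
    field_simp
  have hA0 : A 0 = 0 := by simpa [hA] using h0
  have hA1 : A 1 = 0 := by simpa [hA] using h1
  have hrec' (n : ℤ) (h : A (n + 2) = 0) : A n = 0 := by
    rw [hrec] at h
    simpa [he, hp0, zpow_ne_zero] using h
  have hall (n : ℤ) : A n = 0 ∧ A (n + 1) = 0 := by
    induction n using Int.induction_on with
    | zero => exact ⟨hA0, by simpa using hA1⟩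
    | succ i ih =>
      refine ⟨ih.2, ?_⟩
      rw [add_assoc, show (1 : ℤ) + 1 = 2 from rfl, hrec, ih.1, mul_zero]
    | pred i ih =>
      refine ⟨hrec' _ ?_, ?_⟩
      · rw [show (-(i:ℤ) - 1 + 2) = -(i:ℤ) + 1 by ring]; exact ih.2
      · rw [show (-(i:ℤ) - 1 + 1) = -(i:ℤ) by ring]; exact ih.1
  intro c hc
  have hce (u : ℝ) : c * Complex.exp (u * Complex.I) ≠ 0 := mul_ne_zero hc (Complex.exp_ne_zero _)
  have hfin := fourier_unique (fun u => F (c * Complex.exp (u * Complex.I)))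
    (by
      rw [continuous_iff_continuousAt]
      intro u
      exact ContinuousAt.comp (f := fun u : ℝ => c * Complex.exp (u * Complex.I))
        (hF _ (hce u)).continuousAt (by fun_prop))
    (by
      intro u
      simp only
      congr 2
      push_cast
      rw [add_mul, Complex.exp_periodic])
    (by
      intro n
      have := hsh c hc n
      rw [show (∫ u in (0:ℝ)..(2 * Real.pi), F (Complex.exp (u * Complex.I))
        * (Complex.exp (u * Complex.I)) ^ n) = 0 from (hall n).1] at this
      simp_rw [mul_zpow] at this
      have h2 : (c ^ n) * ∫ u in (0:ℝ)..(2 * Real.pi), F (c * Complex.exp (u * Complex.I))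
        * (Complex.exp (u * Complex.I)) ^ n = 0 := by
        rw [← intervalIntegral.integral_const_mul, ← this]
        congr 1; funext u; ring
      exact (mul_eq_zero.1 h2).resolve_left (zpow_ne_zero _ hc))
    0
  simpa using hfin

lemma exists_rel (v w : Fin 3 → ℂ) : ∃ a : Fin 3 → ℂ, a ≠ 0 ∧
    a 0 * v 0 + a 1 * v 1 + a 2 * v 2 = 0 ∧ a 0 * w 0 + a 1 * w 1 + a 2 * w 2 = 0 := by
  let L : (Fin 3 → ℂ) →ₗ[ℂ] (Fin 2 → ℂ) := Matrix.toLin' !![v 0, v 1, v 2; w 0, w 1, w 2]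
  have hk : LinearMap.ker L ≠ ⊥ := LinearMap.ker_ne_bot_of_finrank_lt (by simp)
  obtain ⟨a, ha, hne⟩ := Submodule.exists_mem_ne_zero_of_ne_bot hk
  refine ⟨a, hne, ?_, ?_⟩
  · have := congrFun (LinearMap.mem_ker.1 ha) 0
    simp [L, Matrix.toLin'_apply, Matrix.mulVec, dotProduct, Fin.sum_univ_three] at this
    linear_combination this
  · have := congrFun (LinearMap.mem_ker.1 ha) 1
    simp [L, Matrix.toLin'_apply, Matrix.mulVec, dotProduct, Fin.sum_univ_three] at this
    linear_combination this

/-- product of two thetas -/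
noncomputable def th2 (p a b z : ℂ) : ℂ := theta p (a * z) * theta p (b * z)

lemma th2_diff {p a b z : ℂ} (hp1 : ‖p‖ < 1) (ha : a ≠ 0) (hb : b ≠ 0) (hz : z ≠ 0) :
    DifferentiableAt ℂ (th2 p a b) z := by
  unfold th2
  refine DifferentiableAt.mul ?_ ?_
  · exact DifferentiableAt.comp z (differentiableAt_theta hp1 (mul_ne_zero ha hz)) (by fun_prop)
  · exact DifferentiableAt.comp z (differentiableAt_theta hp1 (mul_ne_zero hb hz)) (by fun_prop)

lemma th2_q {p a b z : ℂ} (hp0 : p ≠ 0) (hp1 : ‖p‖ < 1) (ha : a ≠ 0) (hb : b ≠ 0) (hz : z ≠ 0) :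
    a * b * z ^ 2 * th2 p a b (p * z) = th2 p a b z := by
  unfold th2
  rw [show a * (p * z) = p * (a * z) by ring, show b * (p * z) = p * (b * z) by ring,
    theta_pmul hp0 hp1 (mul_ne_zero ha hz), theta_pmul hp0 hp1 (mul_ne_zero hb hz)]
  field_simp

lemma th2_rel {p : ℂ} (hp0 : p ≠ 0) (hp1 : ‖p‖ < 1) (e : ℂ) (he : e ≠ 0) (a b : Fin 3 → ℂ)
    (ha : ∀ i, a i ≠ 0) (hb : ∀ i, b i ≠ 0) (hab : ∀ i, a i * b i = e) :
    ∃ c : Fin 3 → ℂ, c ≠ 0 ∧ ∀ z, z ≠ 0 → c 0 * th2 p (a 0) (b 0) z + c 1 * th2 p (a 1) (b 1) z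
      + c 2 * th2 p (a 2) (b 2) z = 0 := by
  obtain ⟨c, hc, h0, h1⟩ := exists_rel
    (fun i => ∫ u in (0:ℝ)..(2 * Real.pi), th2 p (a i) (b i) (Complex.exp (u * Complex.I)))
    (fun i => ∫ u in (0:ℝ)..(2 * Real.pi), th2 p (a i) (b i) (Complex.exp (u * Complex.I))
      * Complex.exp (u * Complex.I))
  have hcont (i : Fin 3) : Continuous (fun u : ℝ => th2 p (a i) (b i) (Complex.exp (u * Complex.I))) := by
    rw [continuous_iff_continuousAt]
    intro u
    exact ContinuousAt.comp (f := fun u : ℝ => Complex.exp (u * Complex.I))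
        (th2_diff hp1 (ha i) (hb i) (Complex.exp_ne_zero _)).continuousAt (by fun_prop)
  have hcont' (i : Fin 3) : Continuous (fun u : ℝ => th2 p (a i) (b i) (Complex.exp (u * Complex.I))
      * Complex.exp (u * Complex.I)) := (hcont i).mul (by fun_prop)
  have hIntg (i : Fin 3) (k : ℂ) : IntervalIntegrable (fun u : ℝ => k * th2 p (a i) (b i) (Complex.exp (u * Complex.I))) MeasureTheory.volume 0 (2 * Real.pi) :=
    (continuous_const.mul (hcont i)).intervalIntegrable (μ := MeasureTheory.volume) 0 (2 * Real.pi)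
  have hIntg' (i : Fin 3) (k : ℂ) : IntervalIntegrable (fun u : ℝ => k * (th2 p (a i) (b i) (Complex.exp (u * Complex.I)) * Complex.exp (u * Complex.I))) MeasureTheory.volume 0 (2 * Real.pi) :=
    (continuous_const.mul (hcont' i)).intervalIntegrable (μ := MeasureTheory.volume) 0 (2 * Real.pi)
  refine ⟨c, hc, deg2_zero hp0 hp1 he _ ?_ ?_ ?_ ?_⟩
  · intro z hz
    exact (((th2_diff hp1 (ha 0) (hb 0) hz).const_mul _).add
      ((th2_diff hp1 (ha 1) (hb 1) hz).const_mul _)).add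
      ((th2_diff hp1 (ha 2) (hb 2) hz).const_mul _)
  · intro z hz
    have := fun i => th2_q (z := z) hp0 hp1 (ha i) (hb i) hz
    simp_rw [hab] at this
    linear_combination c 0 * this 0 + c 1 * this 1 + c 2 * this 2
  · rw [intervalIntegral.integral_add ((hIntg 0 _).add (hIntg 1 _)) (hIntg 2 _),
      intervalIntegral.integral_add (hIntg 0 _) (hIntg 1 _)]
    simp only [intervalIntegral.integral_const_mul]
    exact h0
  · simp only [add_mul, mul_assoc]
    rw [intervalIntegral.integral_add ((hIntg' 0 _).add (hIntg' 1 _)) (hIntg' 2 _),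
      intervalIntegral.integral_add (hIntg' 0 _) (hIntg' 1 _)]
    simp only [intervalIntegral.integral_const_mul]
    exact h1

/-- Weierstrass three-term identity. -/
lemma weier {p : ℂ} (hp0 : p ≠ 0) (hp1 : ‖p‖ < 1) {t s b d z : ℂ} (ht : t ≠ 0) (hs : s ≠ 0)
    (hb : b ≠ 0) (hd : d ≠ 0) (hz : z ≠ 0) :
    t * theta p (s / t) * theta p (t * s * b * d) * (theta p (b * z) * theta p (d * z)) =
      z * (theta p (s / z) * theta p (b * t) * theta p (d * t) * theta p (s * b * d * z)
       - theta p (t / z) * theta p (b * s) * theta p (d * s) * theta p (t * b * d * z)) := by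
  obtain ⟨c, hc, hrel⟩ := th2_rel hp0 hp1 (b * d) (mul_ne_zero hb hd)
    ![b, s⁻¹, t⁻¹] ![d, s * b * d, t * b * d]
    (by intro i; fin_cases i <;> simp [hb, hs, ht])
    (by intro i; fin_cases i <;> simp [hb, hd, hs, ht])
    (by intro i; fin_cases i <;> simp <;> field_simp)
  simp only [Matrix.cons_val_zero, Matrix.cons_val_one, Matrix.cons_val] at hrel
  have inv' (x y : ℂ) (hx : x ≠ 0) (hy : y ≠ 0) : theta p (x / y) = - (x / y) * theta p (y / x) := by
    rw [← inv_div y x, theta_inv hp1 (div_ne_zero hy hx)]; field_simp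
  have es : theta p (s / z) = -(s / z) * theta p (s⁻¹ * z) := by
    rw [inv' s z hs hz]; congr 2; field_simp
  have et : theta p (t / z) = -(t / z) * theta p (t⁻¹ * z) := by
    rw [inv' t z ht hz]; congr 2; field_simp
  -- evaluations
  have hz1 := hrel z hz
  have hs1 := hrel s hs
  have ht1 := hrel t ht
  have hb1 := hrel b⁻¹ (inv_ne_zero hb)
  unfold th2 at hz1 hs1 ht1 hb1
  rw [inv_mul_cancel₀ hs, theta_one hp1, show t⁻¹ * s = s / t by field_simp,
    show t * b * d * s = t * s * b * d by ring] at hs1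
  rw [inv_mul_cancel₀ ht, theta_one hp1, show s⁻¹ * t = t / s by field_simp,
    show s * b * d * t = t * s * b * d by ring, inv' t s ht hs] at ht1
  rw [mul_inv_cancel₀ hb, theta_one hp1, show s * b * d * b⁻¹ = d * s by field_simp,
    show t * b * d * b⁻¹ = d * t by field_simp, ← mul_inv, ← mul_inv,
    theta_inv hp1 (mul_ne_zero hs hb), theta_inv hp1 (mul_ne_zero ht hb),
    mul_comm s b, mul_comm t b] at hb1
  rw [es, et]
  generalize theta p (s / t) = X1 at *
  generalize theta p (t * s * b * d) = X2 at *
  generalize theta p (b * z) = X3 at *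
  generalize theta p (d * z) = X4 at *
  generalize theta p (s⁻¹ * z) = X5 at *
  generalize theta p (b * t) = X6 at *
  generalize theta p (d * t) = X7 at *
  generalize theta p (s * b * d * z) = X8 at *
  generalize theta p (t⁻¹ * z) = X9 at *
  generalize theta p (b * s) = Y1 at *
  generalize theta p (d * s) = Y2 at *
  generalize theta p (t * b * d * z) = Y3 at *
  field_simp at ht1 hb1 ⊢
  by_cases h0 : c 0 = 0
  · rw [h0] at hz1 hs1 ht1 hb1
    by_cases h1 : c 1 = 0
    · have h2 : c 2 ≠ 0 := by
        intro h2; apply hc; funext i; fin_cases i <;> simp [h0, h1, h2]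
      apply mul_left_cancel₀ h2
      simp only [h1] at hz1 hs1 ht1 hb1
      linear_combination t*X3*X4*hs1 - X5*X8*hb1 - t*Y1*Y2*hz1
    · apply mul_left_cancel₀ h1
      linear_combination -X3*X4*ht1 + X6*X7*s*hz1 + X9*Y3*hb1
  · apply mul_left_cancel₀ h0
    linear_combination t*X1*X2*hz1 + X5*X8*ht1 - t*X9*Y3*hs1

lemma weier_W {p : ℂ} (hp0 : p ≠ 0) (hp1 : ‖p‖ < 1) {b d x z : ℂ}
    (hb : b ≠ 0) (hd : d ≠ 0) (hx : x ≠ 0) (hz : z ≠ 0) :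
    theta p (b * d) * theta p (z ^ 2) * (theta p (x * b) * theta p (x * d)) =
      theta p (b * z) * theta p (d * z) * theta p (x * z) * theta p (b * d * x / z)
      - z ^ 2 * (theta p (b / z) * theta p (d / z) * theta p (x / z) * theta p (b * d * x * z)) := by
  have h := weier hp0 hp1 (t := z⁻¹) (s := z) (b := b) (d := d) (z := x) (inv_ne_zero hz) hz hb hd hx
  have e1 : theta p (z / x) = -(z / x) * theta p (x / z) := by
    rw [← inv_div x z, theta_inv hp1 (div_ne_zero hx hz)]; field_simp
  have e2 : theta p (z⁻¹ / x) = -(1 / (x * z)) * theta p (x * z) := by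
    rw [show z⁻¹ / x = (x * z)⁻¹ by field_simp, theta_inv hp1 (mul_ne_zero hx hz)]; field_simp
  rw [e1, e2, show z / z⁻¹ = z ^ 2 by field_simp, show z⁻¹ * z * b * d = b * d by field_simp,
    show z * b * d * x = b * d * x * z by ring, show z⁻¹ * b * d * x = b * d * x / z by field_simp,
    show b * z⁻¹ = b / z by field_simp, show d * z⁻¹ = d / z by field_simp, mul_comm b x,
    mul_comm d x] at h
  generalize theta p (b * d) = X1 at *
  generalize theta p (z ^ 2) = X2 at *
  generalize theta p (x * b) = X3 at *
  generalize theta p (x * d) = X4 at *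
  generalize theta p (b * z) = X5 at *
  generalize theta p (d * z) = X6 at *
  generalize theta p (x * z) = X7 at *
  generalize theta p (b * d * x / z) = X8 at *
  generalize theta p (b / z) = X9 at *
  generalize theta p (d / z) = Y1 at *
  generalize theta p (x / z) = Y2 at *
  generalize theta p (b * d * x * z) = Y3 at *
  field_simp at h
  linear_combination h

lemma weier_B {p : ℂ} (hp0 : p ≠ 0) (hp1 : ‖p‖ < 1) {a s b d e z : ℂ}
    (ha : a ≠ 0) (hs : s ≠ 0) (hb : b ≠ 0) (hd : d ≠ 0) (he : e ≠ 0) (hz : z ≠ 0)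
    (hbal : a * s * b * d * e = p) :
    theta p (a / z) * (theta p (s * b) * theta p (s * d)) * theta p (e * s / z)
      - theta p (s / z) * (theta p (a * b) * theta p (a * d)) * theta p (e * a / z)
    = -(a / z) * theta p (s / a) * theta p e * (theta p (b * z) * theta p (d * z)) := by
  have h := weier hp0 hp1 (t := a) (s := s) (b := b) (d := d) (z := z) ha hs hb hd hz
  have e1 : theta p (s * b * d * z) = theta p (e * a / z) := by
    rw [← theta_pdiv hp0 (s * b * d * z), ← hbal]; congr 1; field_simp
  have e2 : theta p (a * b * d * z) = theta p (e * s / z) := by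
    rw [← theta_pdiv hp0 (a * b * d * z), ← hbal]; congr 1; field_simp
  have e3 : theta p (a * s * b * d) = theta p e := by
    rw [← theta_pdiv hp0 (a * s * b * d), ← hbal]; congr 1; field_simp
  rw [e1, e2, e3, mul_comm b a, mul_comm b s, mul_comm d a, mul_comm d s] at h
  apply mul_left_cancel₀ hz
  have hz' : z * (a / z) = a := mul_div_cancel₀ a hz
  linear_combination h + theta p (s / a) * theta p e * (theta p (b * z) * theta p (d * z)) * hz'

lemma four_term {p : ℂ} (hp0 : p ≠ 0) (hp1 : ‖p‖ < 1) {a s b c d f z : ℂ}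
    (ha : a ≠ 0) (hs : s ≠ 0) (hb : b ≠ 0) (hc : c ≠ 0) (hd : d ≠ 0) (hf : f ≠ 0) (hz : z ≠ 0)
    (hbal : a * s * b * c * d * f = p) (hdf : theta p (d * f) ≠ 0) :
    theta p (z ^ 2) * (theta p (a * z) * theta p (a / z) *
        (theta p (s * b) * theta p (s * c) * theta p (s * d) * theta p (s * f))
      - theta p (s * z) * theta p (s / z) *
        (theta p (a * b) * theta p (a * c) * theta p (a * d) * theta p (a * f)))
    = -a * theta p (s / a) * (z⁻¹ * (theta p (a * z) * theta p (s * z) * theta p (b * z)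
        * theta p (c * z) * theta p (d * z) * theta p (f * z))
      - z ^ 3 * (theta p (a / z) * theta p (s / z) * theta p (b / z)
        * theta p (c / z) * theta p (d / z) * theta p (f / z))) := by
  apply mul_left_cancel₀ hdf
  have W1 := weier_W hp0 hp1 hd hf hs hz
  have W2 := weier_W hp0 hp1 hd hf ha hz
  have B1 := weier_B hp0 hp1 ha hs hb hc (mul_ne_zero hd hf) hz (by rw [← hbal]; ring)
  have B2 := weier_B hp0 hp1 ha hs hb hc (mul_ne_zero hd hf) (inv_ne_zero hz) (by rw [← hbal]; ring)
  simp only [div_inv_eq_mul, ← div_eq_mul_inv] at B2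
  have hz' : z * z⁻¹ = 1 := mul_inv_cancel₀ hz
  have B1' := B1
  rw [div_eq_mul_inv a z] at B1
  simp only [← div_eq_mul_inv] at B1
  linear_combination (theta p (a * z) * theta p (a / z) * (theta p (s * b) * theta p (s * c))) * W1
    - (theta p (s * z) * theta p (s / z) * (theta p (a * b) * theta p (a * c))) * W2
    + (theta p (d * z) * theta p (f * z) * theta p (a * z) * theta p (s * z)) * B1'
    - z ^ 2 * (theta p (d / z) * theta p (f / z) * theta p (a / z) * theta p (s / z)) * B2

noncomputable def EE (p q x z : ℂ) : ℂ := Gm p q (x * z) * Gm p q (x / z)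

noncomputable def WW (p q z : ℂ) : ℂ := theta p (z ^ 2) * theta q ((z ^ 2)⁻¹)

noncomputable def eI (u : ℝ) : ℂ := Complex.exp (u * Complex.I)

noncomputable def I6 (p q a b c d f s : ℂ) : ℂ := ∫ u in (0:ℝ)..(2 * Real.pi),
  EE p q a (eI u) * EE p q b (eI u) * EE p q c (eI u) * EE p q d (eI u) * EE p q f (eI u)
    * EE p q s (eI u) * WW p q (eI u)

lemma eI_ne (u : ℝ) : eI u ≠ 0 := Complex.exp_ne_zero _

lemma norm_eI (u : ℝ) : ‖eI u‖ = 1 := Complex.norm_exp_ofReal_mul_I u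

lemma cont_eI : Continuous eI := by unfold eI; fun_prop

lemma EE_contAt {p q : ℂ} (hp1 : ‖p‖ < 1) (hq1 : ‖q‖ < 1) {y : ℂ × ℝ} (h0 : y.1 ≠ 0)
    (h1 : ‖y.1‖ < 1) : ContinuousAt (fun y : ℂ × ℝ => EE p q y.1 (eI y.2)) y := by
  have hc : ContinuousAt (fun y : ℂ × ℝ => eI y.2) y := (cont_eI.comp continuous_snd).continuousAt
  unfold EE
  refine ContinuousAt.mul ?_ ?_
  · refine ContinuousAt.comp (g := Gm p q) (f := fun y : ℂ × ℝ => y.1 * eI y.2) ?_ ?_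
    · exact (differentiableAt_Gm hp1 hq1 (mul_ne_zero h0 (eI_ne _))
        (by rw [norm_mul, norm_eI, mul_one]; exact h1)).continuousAt
    · exact continuousAt_fst.mul hc
  · refine ContinuousAt.comp (g := Gm p q) (f := fun y : ℂ × ℝ => y.1 / eI y.2) ?_ ?_
    · exact (differentiableAt_Gm hp1 hq1 (div_ne_zero h0 (eI_ne _))
        (by rw [norm_div, norm_eI, div_one]; exact h1)).continuousAt
    · exact continuousAt_fst.div hc (eI_ne _)

lemma EE_cont {p q : ℂ} (hp1 : ‖p‖ < 1) (hq1 : ‖q‖ < 1) {x : ℂ} (h0 : x ≠ 0)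
    (h1 : ‖x‖ < 1) : Continuous (fun u : ℝ => EE p q x (eI u)) := by
  rw [continuous_iff_continuousAt]
  intro u
  exact ContinuousAt.comp (g := fun y : ℂ × ℝ => EE p q y.1 (eI y.2)) (f := fun u : ℝ => (x, u))
    (EE_contAt hp1 hq1 h0 h1) (by fun_prop)

lemma EE_diff {p q : ℂ} (hp1 : ‖p‖ < 1) (hq1 : ‖q‖ < 1) {x : ℂ} (h0 : x ≠ 0)
    (h1 : ‖x‖ < 1) (u : ℝ) : DifferentiableAt ℂ (fun x => EE p q x (eI u)) x := by
  unfold EE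
  refine DifferentiableAt.mul ?_ ?_
  · refine DifferentiableAt.comp x (g := Gm p q) (f := fun y : ℂ => y * eI u) ?_ (by fun_prop)
    exact (differentiableAt_Gm hp1 hq1 (mul_ne_zero h0 (eI_ne _))
        (by rw [norm_mul, norm_eI, mul_one]; exact h1))
  · refine DifferentiableAt.comp x (g := Gm p q) (f := fun y : ℂ => y / eI u) ?_ (by fun_prop)
    exact (differentiableAt_Gm hp1 hq1 (div_ne_zero h0 (eI_ne _))
        (by rw [norm_div, norm_eI, div_one]; exact h1))

lemma WW_cont {p q : ℂ} (hp1 : ‖p‖ < 1) (hq1 : ‖q‖ < 1) : Continuous (fun u : ℝ => WW p q (eI u)) := by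
  rw [continuous_iff_continuousAt]
  intro u
  have h := pow_ne_zero 2 (eI_ne u)
  have hc : ContinuousAt (fun u => eI u ^ 2) u := (cont_eI.pow 2).continuousAt
  unfold WW
  refine ContinuousAt.mul ?_ ?_
  · exact ContinuousAt.comp (g := theta p) (f := fun u => eI u ^ 2)
      (differentiableAt_theta hp1 h).continuousAt hc
  · exact ContinuousAt.comp (g := theta q) (f := fun u => (eI u ^ 2)⁻¹)
      (differentiableAt_theta hq1 (inv_ne_zero h)).continuousAt (hc.inv₀ h)

lemma integrand_cont {p q : ℂ} (hp1 : ‖p‖ < 1) (hq1 : ‖q‖ < 1) {a b c d f s : ℂ}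
    (ha : a ≠ 0) (hb : b ≠ 0) (hc : c ≠ 0) (hd : d ≠ 0) (hf : f ≠ 0) (hs : s ≠ 0)
    (ha1 : ‖a‖ < 1) (hb1 : ‖b‖ < 1) (hc1 : ‖c‖ < 1) (hd1 : ‖d‖ < 1) (hf1 : ‖f‖ < 1) (hs1 : ‖s‖ < 1) :
    Continuous (fun u : ℝ => EE p q a (eI u) * EE p q b (eI u) * EE p q c (eI u) * EE p q d (eI u)
      * EE p q f (eI u) * EE p q s (eI u) * WW p q (eI u)) :=
  ((((((EE_cont hp1 hq1 ha ha1).mul (EE_cont hp1 hq1 hb hb1)).mul (EE_cont hp1 hq1 hc hc1)).mul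
    (EE_cont hp1 hq1 hd hd1)).mul (EE_cont hp1 hq1 hf hf1)).mul (EE_cont hp1 hq1 hs hs1)).mul
    (WW_cont hp1 hq1)

lemma EE_q {p q : ℂ} (hp1 : ‖p‖ < 1) (hq0 : q ≠ 0) (hq1 : ‖q‖ < 1) {x : ℂ} (h1 : ‖x‖ < 1) (z : ℂ)
    (hz : ‖z‖ = 1) : EE p q (q * x) z = theta p (x * z) * theta p (x / z) * EE p q x z := by
  unfold EE
  rw [show q * x * z = q * (x * z) by ring, show q * x / z = q * (x / z) by ring,
    Gm_q hp1 hq0 hq1 (qpoch_ne_zero hp1 (by rw [norm_mul, hz, mul_one]; exact h1)),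
    Gm_q hp1 hq0 hq1 (qpoch_ne_zero hp1 (by rw [norm_div, hz, div_one]; exact h1))]
  ring

/-- building block of the telescoping function -/
noncomputable def HH (p q x z : ℂ) : ℂ := Gm p q (q * x * z) * Gm p q (x / z)

lemma HH_one {p q : ℂ} (hp1 : ‖p‖ < 1) (hq0 : q ≠ 0) (hq1 : ‖q‖ < 1) {x : ℂ} (h1 : ‖x‖ < 1) (z : ℂ)
    (hz : ‖z‖ = 1) : HH p q x z = theta p (x * z) * EE p q x z := by
  unfold HH EE
  rw [show q * x * z = q * (x * z) by ring,
    Gm_q hp1 hq0 hq1 (qpoch_ne_zero hp1 (by rw [norm_mul, hz, mul_one]; exact h1))]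
  ring

lemma HH_q {p q : ℂ} (hp1 : ‖p‖ < 1) (hq0 : q ≠ 0) (hq1 : ‖q‖ < 1) {x : ℂ} (h1 : ‖x‖ < 1) (z : ℂ)
    (hz : ‖z‖ = 1) : HH p q x (q⁻¹ * z) = theta p (x / z) * EE p q x z := by
  have hz0 : z ≠ 0 := by rintro rfl; simp at hz
  unfold HH EE
  rw [show q * x * (q⁻¹ * z) = x * z by field_simp, show x / (q⁻¹ * z) = q * (x / z) by field_simp,
    Gm_q hp1 hq0 hq1 (qpoch_ne_zero hp1 (by rw [norm_div, hz, div_one]; exact h1))]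
  ring

lemma HH_diff {p q : ℂ} (hp1 : ‖p‖ < 1) (hq0 : q ≠ 0) (hq1 : ‖q‖ < 1) {x z : ℂ} (h0 : x ≠ 0)
    (h1 : ‖x‖ < 1) (hz : 1 ≤ ‖z‖) (hz' : ‖z‖ ≤ ‖q⁻¹‖) : DifferentiableAt ℂ (HH p q x) z := by
  have hz0 : z ≠ 0 := by rintro rfl; simp at hz; linarith
  have hqn : 0 < ‖q‖ := norm_pos_iff.2 hq0
  have hx := norm_nonneg x
  unfold HH
  refine DifferentiableAt.mul ?_ ?_
  · refine DifferentiableAt.comp z (g := Gm p q) (f := fun y : ℂ => q * x * y) ?_ (by fun_prop)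
    refine differentiableAt_Gm hp1 hq1 (by positivity) ?_
    rw [norm_inv, ← one_div, le_div_iff₀ hqn] at hz'
    calc ‖q * x * z‖ = ‖x‖ * (‖z‖ * ‖q‖) := by rw [norm_mul, norm_mul]; ring
      _ ≤ ‖x‖ * 1 := by gcongr
      _ < 1 := by simpa using h1
  · refine DifferentiableAt.comp z (g := Gm p q) (f := fun y : ℂ => x / y) ?_ (by fun_prop (disch := assumption))
    refine differentiableAt_Gm hp1 hq1 (by positivity) ?_
    rw [norm_div]
    exact (div_le_self hx hz).trans_lt h1

lemma func_eq {p q : ℂ} (hp0 : p ≠ 0) (hp1 : ‖p‖ < 1) (hq0 : q ≠ 0) (hq1 : ‖q‖ < 1)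
    {a b c d f s : ℂ}
    (ha : a ≠ 0) (hb : b ≠ 0) (hc : c ≠ 0) (hd : d ≠ 0) (hf : f ≠ 0) (hs : s ≠ 0)
    (ha1 : ‖a‖ < 1) (hb1 : ‖b‖ < 1) (hc1 : ‖c‖ < 1) (hd1 : ‖d‖ < 1) (hf1 : ‖f‖ < 1) (hs1 : ‖s‖ < 1)
    (hbal : a * s * b * c * d * f = p) (hdf : theta p (d * f) ≠ 0) :
    I6 p q (q * a) b c d f s * (theta p (s * b) * theta p (s * c) * theta p (s * d) * theta p (s * f))
    = I6 p q a b c d f (q * s) *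
      (theta p (a * b) * theta p (a * c) * theta p (a * d) * theta p (a * f)) := by
  have hqa : ‖q * a‖ < 1 := by
    rw [norm_mul]; exact mul_lt_one_of_nonneg_of_lt_one_left (norm_nonneg _) hq1 ha1.le
  have hqs : ‖q * s‖ < 1 := by
    rw [norm_mul]; exact mul_lt_one_of_nonneg_of_lt_one_left (norm_nonneg _) hq1 hs1.le
  set G : ℂ → ℂ := fun z => HH p q a z * HH p q b z * HH p q c z * HH p q d z * HH p q f z *
    HH p q s z * theta q ((z ^ 2)⁻¹) * z⁻¹ with hG
  have hqn : 0 < ‖q‖ := norm_pos_iff.2 hq0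
  have hGd (z : ℂ) (h1 : 1 ≤ ‖z‖) (h2 : ‖z‖ ≤ ‖q⁻¹‖) : DifferentiableAt ℂ G z := by
    have hz0 : z ≠ 0 := by rintro rfl; simp at h1; linarith
    have ht : DifferentiableAt ℂ (fun z => theta q ((z ^ 2)⁻¹)) z := by
      refine DifferentiableAt.comp z (g := theta q) (f := fun z : ℂ => (z ^ 2)⁻¹)
        (differentiableAt_theta hq1 (by positivity)) ?_
      exact (differentiableAt_pow 2).inv (by positivity)
    exact (((((((HH_diff hp1 hq0 hq1 ha ha1 h1 h2).mul (HH_diff hp1 hq0 hq1 hb hb1 h1 h2)).mul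
      (HH_diff hp1 hq0 hq1 hc hc1 h1 h2)).mul (HH_diff hp1 hq0 hq1 hd hd1 h1 h2)).mul
      (HH_diff hp1 hq0 hq1 hf hf1 h1 h2)).mul (HH_diff hp1 hq0 hq1 hs hs1 h1 h2)).mul ht).mul
      (differentiableAt_inv hz0)
  have hshift := integral_shift G (a := q⁻¹) (b := 1) one_ne_zero
    (by rw [norm_one, norm_inv]; exact (one_le_inv₀ hqn).2 hq1.le)
    (fun z h1 h2 => hGd z (by simpa using h1) h2)
  simp only [one_mul] at hshift
  change (∫ u in (0:ℝ)..(2 * Real.pi), G (q⁻¹ * eI u)) = ∫ u in (0:ℝ)..(2 * Real.pi), G (eI u) at hshift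
  have hcG (k : ℂ) (hk1 : 1 ≤ ‖k‖) (hk2 : ‖k‖ ≤ ‖q⁻¹‖) : Continuous (fun u : ℝ => G (k * eI u)) := by
    rw [continuous_iff_continuousAt]
    intro u
    refine ContinuousAt.comp (g := G) (f := fun u : ℝ => k * eI u) ?_
      (continuous_const.mul cont_eI).continuousAt
    exact (hGd _ (by simpa [norm_eI] using hk1) (by simpa [norm_eI] using hk2)).continuousAt
  have hq1i : 1 ≤ ‖q⁻¹‖ := by rw [norm_inv]; exact (one_le_inv₀ hqn).2 hq1.le
  have c1 := integrand_cont hp1 hq1 (mul_ne_zero hq0 ha) hb hc hd hf hs hqa hb1 hc1 hd1 hf1 hs1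
  have c2 := integrand_cont hp1 hq1 ha hb hc hd hf (mul_ne_zero hq0 hs) ha1 hb1 hc1 hd1 hf1 hqs
  have c3 := hcG 1 (by simp) (by simpa using hq1i)
  have c4 := hcG q⁻¹ hq1i le_rfl
  simp only [one_mul] at c3
  have hpt (u : ℝ) :
      EE p q (q * a) (eI u) * EE p q b (eI u) * EE p q c (eI u) * EE p q d (eI u) * EE p q f (eI u)
        * EE p q s (eI u) * WW p q (eI u)
        * (theta p (s * b) * theta p (s * c) * theta p (s * d) * theta p (s * f))
      - EE p q a (eI u) * EE p q b (eI u) * EE p q c (eI u) * EE p q d (eI u) * EE p q f (eI u)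
        * EE p q (q * s) (eI u) * WW p q (eI u)
        * (theta p (a * b) * theta p (a * c) * theta p (a * d) * theta p (a * f))
      = -a * theta p (s / a) * (G (eI u) - G (q⁻¹ * eI u)) := by
    have hz := norm_eI u
    have hz0 := eI_ne u
    generalize eI u = z at hz hz0
    have h4 := four_term hp0 hp1 ha hs hb hc hd hf hz0 hbal hdf
    have hth : theta q (((q⁻¹ * z) ^ 2)⁻¹) * (q⁻¹ * z)⁻¹ = theta q ((z ^ 2)⁻¹) * z ^ 3 := by
      rw [show ((q⁻¹ * z) ^ 2)⁻¹ = q * (q * (z ^ 2)⁻¹) by field_simp,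
        theta_pmul hq0 hq1 (by positivity), theta_pmul hq0 hq1 (by positivity)]
      field_simp
    have hG1 : G z = EE p q a z * EE p q b z * EE p q c z * EE p q d z * EE p q f z * EE p q s z
        * theta q ((z ^ 2)⁻¹) * (z⁻¹ * (theta p (a * z) * theta p (s * z) * theta p (b * z)
        * theta p (c * z) * theta p (d * z) * theta p (f * z))) := by
      simp only [hG]
      rw [HH_one hp1 hq0 hq1 ha1 z hz, HH_one hp1 hq0 hq1 hb1 z hz, HH_one hp1 hq0 hq1 hc1 z hz,
        HH_one hp1 hq0 hq1 hd1 z hz, HH_one hp1 hq0 hq1 hf1 z hz, HH_one hp1 hq0 hq1 hs1 z hz]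
      ring
    have hG2 : G (q⁻¹ * z) = EE p q a z * EE p q b z * EE p q c z * EE p q d z * EE p q f z
        * EE p q s z
        * theta q ((z ^ 2)⁻¹) * (z ^ 3 * (theta p (a / z) * theta p (s / z) * theta p (b / z)
        * theta p (c / z) * theta p (d / z) * theta p (f / z))) := by
      simp only [hG]
      rw [HH_q hp1 hq0 hq1 ha1 z hz, HH_q hp1 hq0 hq1 hb1 z hz, HH_q hp1 hq0 hq1 hc1 z hz,
        HH_q hp1 hq0 hq1 hd1 z hz, HH_q hp1 hq0 hq1 hf1 z hz, HH_q hp1 hq0 hq1 hs1 z hz]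
      rw [mul_assoc _ (theta q _) _, hth]
      ring
    rw [hG1, hG2, EE_q hp1 hq0 hq1 ha1 z hz, EE_q hp1 hq0 hq1 hs1 z hz, WW]
    linear_combination (EE p q a z * EE p q b z * EE p q c z * EE p q d z * EE p q f z * EE p q s z
        * theta q ((z ^ 2)⁻¹)) * h4
  rw [← sub_eq_zero]
  unfold I6
  rw [← intervalIntegral.integral_mul_const, ← intervalIntegral.integral_mul_const,
    ← intervalIntegral.integral_sub]
  · simp_rw [hpt]
    rw [intervalIntegral.integral_const_mul, intervalIntegral.integral_sub
      (c3.intervalIntegrable _ _) (c4.intervalIntegrable _ _), hshift, sub_self, mul_zero]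
  · exact (c1.mul continuous_const).intervalIntegrable _ _
  · exact (c2.mul continuous_const).intervalIntegrable _ _

noncomputable def B6 (p q a b c d f s : ℂ) : ℂ :=
  (Gm p q (a * b) * Gm p q (a * c) * Gm p q (a * d) * Gm p q (a * f) * Gm p q (a * s)) *
  (Gm p q (b * c) * Gm p q (b * d) * Gm p q (b * f) * Gm p q (b * s)) *
  (Gm p q (c * d) * Gm p q (c * f) * Gm p q (c * s)) *
  (Gm p q (d * f) * Gm p q (d * s)) * Gm p q (f * s)

noncomputable def R5 (p q a b c d f : ℂ) : ℂ :=
  I6 p q a b c d f (p * q / (a * b * c * d * f)) / B6 p q a b c d f (p * q / (a * b * c * d * f))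

lemma R5_swap12 (p q a b c d f : ℂ) : R5 p q a b c d f = R5 p q b a c d f := by
  unfold R5
  rw [show b * a * c * d * f = a * b * c * d * f by ring]
  generalize p * q / (a * b * c * d * f) = s
  refine congrArg₂ (· / ·) ?_ ?_
  · unfold I6; congr 1; funext u; ring
  · unfold B6; rw [mul_comm b a]; ring

lemma R5_swap23 (p q a b c d f : ℂ) : R5 p q a b c d f = R5 p q a c b d f := by
  unfold R5
  rw [show a * c * b * d * f = a * b * c * d * f by ring]
  generalize p * q / (a * b * c * d * f) = s
  refine congrArg₂ (· / ·) ?_ ?_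
  · unfold I6; congr 1; funext u; ring
  · unfold B6; rw [mul_comm c b]; ring

lemma R5_swap34 (p q a b c d f : ℂ) : R5 p q a b c d f = R5 p q a b d c f := by
  unfold R5
  rw [show a * b * d * c * f = a * b * c * d * f by ring]
  generalize p * q / (a * b * c * d * f) = s
  refine congrArg₂ (· / ·) ?_ ?_
  · unfold I6; congr 1; funext u; ring
  · unfold B6; rw [mul_comm d c]; ring

lemma R5_swap45 (p q a b c d f : ℂ) : R5 p q a b c d f = R5 p q a b c f d := by
  unfold R5
  rw [show a * b * c * f * d = a * b * c * d * f by ring]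
  generalize p * q / (a * b * c * d * f) = s
  refine congrArg₂ (· / ·) ?_ ?_
  · unfold I6; congr 1; funext u; ring
  · unfold B6; rw [mul_comm f d]; ring

lemma R5_rot3 (p q a b x d f : ℂ) : R5 p q a b x d f = R5 p q x a b d f := by
  rw [R5_swap23, R5_swap12]

lemma R5_rot4 (p q a b c x f : ℂ) : R5 p q a b c x f = R5 p q x a b c f := by
  rw [R5_swap34, R5_rot3]

lemma R5_rot5 (p q a b c d x : ℂ) : R5 p q a b c d x = R5 p q x a b c d := by
  rw [R5_swap45, R5_rot4]

lemma norm_lt_of_mul {y w p : ℂ} (hy : y ≠ 0) (h : y * w = p) (hw : ‖w‖ < 1) : ‖p‖ < ‖y‖ := by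
  rw [← h, norm_mul]
  have := norm_pos_iff.2 hy
  nlinarith

lemma norm_mul_lt {a b : ℂ} (ha : ‖a‖ < 1) (hb : ‖b‖ < 1) : ‖a * b‖ < 1 := by
  rw [norm_mul]; exact mul_lt_one_of_nonneg_of_lt_one_left (norm_nonneg _) ha hb.le

lemma theta_pair_ne {p : ℂ} (hp1 : ‖p‖ < 1) {x y w : ℂ} (hx : x ≠ 0) (hy : y ≠ 0)
    (hx1 : ‖x‖ < 1) (hy1 : ‖y‖ < 1) (hw : ‖w‖ < 1) (h : (x * y) * w = p) : theta p (x * y) ≠ 0 :=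
  theta_ne_zero hp1 (norm_lt_of_mul (mul_ne_zero hx hy) h hw) (norm_mul_lt hx1 hy1)

lemma R5_q {p q : ℂ} (hp0 : p ≠ 0) (hp1 : ‖p‖ < 1) (hq0 : q ≠ 0) (hq1 : ‖q‖ < 1)
    {a b c d f : ℂ}
    (ha : a ≠ 0) (hb : b ≠ 0) (hc : c ≠ 0) (hd : d ≠ 0) (hf : f ≠ 0)
    (ha1 : ‖a‖ < 1) (hb1 : ‖b‖ < 1) (hc1 : ‖c‖ < 1) (hd1 : ‖d‖ < 1) (hf1 : ‖f‖ < 1)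
    (hv : ‖p‖ < ‖a * b * c * d * f‖) : R5 p q (q * a) b c d f = R5 p q a b c d f := by
  have hprod : a * b * c * d * f ≠ 0 := by positivity
  set s := p / (a * b * c * d * f) with hsdef
  have hs : s ≠ 0 := by positivity
  have hs1 : ‖s‖ < 1 := by
    rw [hsdef, norm_div, div_lt_one (norm_pos_iff.2 hprod)]; exact hv
  have hbal : a * s * b * c * d * f = p := by rw [hsdef]; field_simp
  have e1 : p * q / (q * a * b * c * d * f) = s := by rw [hsdef]; field_simp
  have e2 : p * q / (a * b * c * d * f) = q * s := by rw [hsdef]; field_simp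
  have hfe := func_eq hp0 hp1 hq0 hq1 ha hb hc hd hf hs ha1 hb1 hc1 hd1 hf1 hs1 hbal
    (theta_pair_ne hp1 (w := a * s * b * c) hd hf hd1 hf1
      (norm_mul_lt (norm_mul_lt (norm_mul_lt ha1 hs1) hb1) hc1) (by rw [← hbal]; ring))
  have n1 := theta_pair_ne hp1 (w := a * c * d * f) hs hb hs1 hb1
      (norm_mul_lt (norm_mul_lt (norm_mul_lt ha1 hc1) hd1) hf1) (by rw [← hbal]; ring)
  have n2 := theta_pair_ne hp1 (w := a * b * d * f) hs hc hs1 hc1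
      (norm_mul_lt (norm_mul_lt (norm_mul_lt ha1 hb1) hd1) hf1) (by rw [← hbal]; ring)
  have n3 := theta_pair_ne hp1 (w := a * b * c * f) hs hd hs1 hd1
      (norm_mul_lt (norm_mul_lt (norm_mul_lt ha1 hb1) hc1) hf1) (by rw [← hbal]; ring)
  have n4 := theta_pair_ne hp1 (w := a * b * c * d) hs hf hs1 hf1
      (norm_mul_lt (norm_mul_lt (norm_mul_lt ha1 hb1) hc1) hd1) (by rw [← hbal]; ring)
  have m1 := theta_pair_ne hp1 (w := s * c * d * f) ha hb ha1 hb1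
      (norm_mul_lt (norm_mul_lt (norm_mul_lt hs1 hc1) hd1) hf1) (by rw [← hbal]; ring)
  have m2 := theta_pair_ne hp1 (w := s * b * d * f) ha hc ha1 hc1
      (norm_mul_lt (norm_mul_lt (norm_mul_lt hs1 hb1) hd1) hf1) (by rw [← hbal]; ring)
  have m3 := theta_pair_ne hp1 (w := s * b * c * f) ha hd ha1 hd1
      (norm_mul_lt (norm_mul_lt (norm_mul_lt hs1 hb1) hc1) hf1) (by rw [← hbal]; ring)
  have m4 := theta_pair_ne hp1 (w := s * b * c * d) ha hf ha1 hf1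
      (norm_mul_lt (norm_mul_lt (norm_mul_lt hs1 hb1) hc1) hd1) (by rw [← hbal]; ring)
  unfold R5
  rw [e1, e2]
  have hB : B6 p q (q * a) b c d f s * (theta p (s * b) * theta p (s * c) * theta p (s * d) * theta p (s * f))
    = B6 p q a b c d f (q * s) *
      (theta p (a * b) * theta p (a * c) * theta p (a * d) * theta p (a * f)) := by
    have g (x y : ℂ) (hx : ‖x‖ < 1) (hy : ‖y‖ < 1) : Gm p q (q * (x * y)) = theta p (x * y) * Gm p q (x * y) :=
      Gm_q hp1 hq0 hq1 (qpoch_ne_zero hp1 (norm_mul_lt hx hy))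
    unfold B6
    rw [show q * a * b = q * (a * b) by ring, show q * a * c = q * (a * c) by ring,
      show q * a * d = q * (a * d) by ring, show q * a * f = q * (a * f) by ring,
      show b * (q * s) = q * (s * b) by ring, show c * (q * s) = q * (s * c) by ring,
      show d * (q * s) = q * (s * d) by ring, show f * (q * s) = q * (s * f) by ring,
      show a * (q * s) = q * a * s by ring, g a b ha1 hb1, g a c ha1 hc1, g a d ha1 hd1,
      g a f ha1 hf1, g s b hs1 hb1, g s c hs1 hc1, g s d hs1 hd1, g s f hs1 hf1, mul_comm b s,
      mul_comm c s, mul_comm d s, mul_comm f s]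
    ring
  have hS : theta p (s * b) * theta p (s * c) * theta p (s * d) * theta p (s * f) ≠ 0 := by positivity
  have hX : theta p (a * b) * theta p (a * c) * theta p (a * d) * theta p (a * f) ≠ 0 := by positivity
  rw [← mul_div_mul_right _ _ hS, hfe, hB, mul_div_mul_right _ _ hX]

lemma annulus_nontriv {k : ℝ} (hk0 : 0 ≤ k) {x : ℂ} (hx : k < ‖x‖) : x ≠ 0 :=
  norm_pos_iff.1 (hk0.trans_lt hx)

lemma B6_ne {p q : ℂ} (hp1 : ‖p‖ < 1) (hq1 : ‖q‖ < 1)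
    {a b c d f s : ℂ}
    (ha : a ≠ 0) (hb : b ≠ 0) (hc : c ≠ 0) (hd : d ≠ 0) (hf : f ≠ 0) (hs : s ≠ 0)
    (ha1 : ‖a‖ < 1) (hb1 : ‖b‖ < 1) (hc1 : ‖c‖ < 1) (hd1 : ‖d‖ < 1) (hf1 : ‖f‖ < 1) (hs1 : ‖s‖ < 1)
    (hbal : a * b * c * d * f * s = p * q) : B6 p q a b c d f s ≠ 0 := by
  have g {x y u v w r : ℂ} (hx : x ≠ 0) (hy : y ≠ 0) (hx1 : ‖x‖ < 1) (hy1 : ‖y‖ < 1)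
      (hu : ‖u‖ < 1) (hv : ‖v‖ < 1) (hw : ‖w‖ < 1) (hr : ‖r‖ < 1)
      (h : x * y * u * v * w * r = p * q) : Gm p q (x * y) ≠ 0 :=
    Gm_ne_zero hp1 hq1 (norm_lt_of_mul (w := u * v * w * r) (mul_ne_zero hx hy) (by rw [← h]; ring)
      (norm_mul_lt (norm_mul_lt (norm_mul_lt hu hv) hw) hr)) (norm_mul_lt hx1 hy1)
  unfold B6
  refine mul_ne_zero (mul_ne_zero (mul_ne_zero (mul_ne_zero (mul_ne_zero (mul_ne_zero (mul_ne_zero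
    (mul_ne_zero ?_ ?_) ?_) ?_) ?_) (mul_ne_zero (mul_ne_zero (mul_ne_zero ?_ ?_) ?_) ?_))
    (mul_ne_zero (mul_ne_zero ?_ ?_) ?_)) (mul_ne_zero ?_ ?_)) ?_
  · exact g ha hb ha1 hb1 hc1 hd1 hf1 hs1 (by rw [← hbal])
  · exact g ha hc ha1 hc1 hb1 hd1 hf1 hs1 (by rw [← hbal]; ring)
  · exact g ha hd ha1 hd1 hb1 hc1 hf1 hs1 (by rw [← hbal]; ring)
  · exact g ha hf ha1 hf1 hb1 hc1 hd1 hs1 (by rw [← hbal]; ring)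
  · exact g ha hs ha1 hs1 hb1 hc1 hd1 hf1 (by rw [← hbal]; ring)
  · exact g hb hc hb1 hc1 ha1 hd1 hf1 hs1 (by rw [← hbal]; ring)
  · exact g hb hd hb1 hd1 ha1 hc1 hf1 hs1 (by rw [← hbal]; ring)
  · exact g hb hf hb1 hf1 ha1 hc1 hd1 hs1 (by rw [← hbal]; ring)
  · exact g hb hs hb1 hs1 ha1 hc1 hd1 hf1 (by rw [← hbal]; ring)
  · exact g hc hd hc1 hd1 ha1 hb1 hf1 hs1 (by rw [← hbal]; ring)
  · exact g hc hf hc1 hf1 ha1 hb1 hd1 hs1 (by rw [← hbal]; ring)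
  · exact g hc hs hc1 hs1 ha1 hb1 hd1 hf1 (by rw [← hbal]; ring)
  · exact g hd hf hd1 hf1 ha1 hb1 hc1 hs1 (by rw [← hbal]; ring)
  · exact g hd hs hd1 hs1 ha1 hb1 hc1 hf1 (by rw [← hbal]; ring)
  · exact g hf hs hf1 hs1 ha1 hb1 hc1 hd1 (by rw [← hbal]; ring)

lemma R5_diff {p q : ℂ} (hp0 : p ≠ 0) (hp1 : ‖p‖ < 1) (hq0 : q ≠ 0) (hq1 : ‖q‖ < 1)
    {b c d f : ℂ} (hb : b ≠ 0) (hc : c ≠ 0) (hd : d ≠ 0) (hf : f ≠ 0)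
    (hb1 : ‖b‖ < 1) (hc1 : ‖c‖ < 1) (hd1 : ‖d‖ < 1) (hf1 : ‖f‖ < 1) :
    DifferentiableOn ℂ (fun x => R5 p q x b c d f)
      {x | ‖p * q / (b * c * d * f)‖ < ‖x‖ ∧ ‖x‖ < 1} := by
  set k := p * q / (b * c * d * f) with hk
  have hk0 : k ≠ 0 := by positivity
  have hx0 {x : ℂ} (hx : ‖k‖ < ‖x‖) : x ≠ 0 := annulus_nontriv (norm_nonneg _) hx
  have hs {x : ℂ} (hx : ‖k‖ < ‖x‖) : p * q / (x * b * c * d * f) = k / x := by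
    have := hx0 hx
    rw [hk]; field_simp
  have hsn {x : ℂ} (hx : ‖k‖ < ‖x‖) : ‖k / x‖ < 1 := by
    rw [norm_div, div_lt_one (norm_pos_iff.2 (hx0 hx))]; exact hx
  have hs0 {x : ℂ} (hx : ‖k‖ < ‖x‖) : k / x ≠ 0 := div_ne_zero hk0 (hx0 hx)
  have hkd {x : ℂ} (hx : ‖k‖ < ‖x‖) : DifferentiableAt ℂ (fun x => k / x) x := by
    have := hx0 hx
    fun_prop (disch := assumption)
  set U := {x : ℂ | ‖k‖ < ‖x‖ ∧ ‖x‖ < 1} with hU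
  have hUo : IsOpen U := isOpen_annulus _ _
  suffices h : DifferentiableOn ℂ (fun x => I6 p q x b c d f (k / x) / B6 p q x b c d f (k / x)) U by
    refine h.congr fun x hx => ?_
    simp only [R5]
    rw [hs hx.1]
  refine DifferentiableOn.div ?_ ?_ ?_
  · unfold I6
    refine differentiableOn_param (fun x u => EE p q x (eI u) * EE p q b (eI u) * EE p q c (eI u)
      * EE p q d (eI u) * EE p q f (eI u) * EE p q (k / x) (eI u) * WW p q (eI u)) hUo _ ?_ ?_
    · rintro ⟨x, u⟩ ⟨hx, -⟩
      refine ContinuousAt.continuousWithinAt ?_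
      have g {y : ℂ} (hy : y ≠ 0) (hy1 : ‖y‖ < 1) : ContinuousAt (fun v : ℂ × ℝ => EE p q y (eI v.2)) (x, u) :=
        ((EE_cont hp1 hq1 hy hy1).comp continuous_snd).continuousAt
      have g1 : ContinuousAt (fun v : ℂ × ℝ => EE p q v.1 (eI v.2)) (x, u) :=
        EE_contAt hp1 hq1 (hx0 hx.1) hx.2
      have g2 : ContinuousAt (fun v : ℂ × ℝ => EE p q (k / v.1) (eI v.2)) (x, u) := by
        refine ContinuousAt.comp (g := fun v : ℂ × ℝ => EE p q v.1 (eI v.2))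
          (f := fun v : ℂ × ℝ => (k / v.1, v.2)) (EE_contAt hp1 hq1 (hs0 hx.1) (hsn hx.1)) ?_
        exact (continuousAt_const.div continuousAt_fst (hx0 hx.1)).prodMk continuousAt_snd
      exact ((((((g1.mul (g hb hb1)).mul (g hc hc1)).mul (g hd hd1)).mul (g hf hf1)).mul g2).mul
        ((WW_cont hp1 hq1).comp continuous_snd).continuousAt)
    · intro u x hx
      refine DifferentiableAt.differentiableWithinAt ?_
      have g1 := EE_diff hp1 hq1 (hx0 hx.1) hx.2 u
      have g2 : DifferentiableAt ℂ (fun x => EE p q (k / x) (eI u)) x :=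
        DifferentiableAt.comp x (g := fun x => EE p q x (eI u)) (f := fun x => k / x)
          (EE_diff hp1 hq1 (hs0 hx.1) (hsn hx.1) u) (hkd hx.1)
      exact (((((g1.mul_const _).mul_const _).mul_const _).mul_const _).mul g2).mul_const _
  · intro x hx
    refine DifferentiableAt.differentiableWithinAt ?_
    have g1 {y : ℂ} (hy : y ≠ 0) (hy1 : ‖y‖ < 1) : DifferentiableAt ℂ (fun x => Gm p q (x * y)) x :=
      DifferentiableAt.comp x (g := Gm p q) (f := fun x => x * y)
        (differentiableAt_Gm hp1 hq1 (mul_ne_zero (hx0 hx.1) hy) (norm_mul_lt hx.2 hy1)) (by fun_prop)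
    have g2 {y : ℂ} (hy : y ≠ 0) (hy1 : ‖y‖ < 1) : DifferentiableAt ℂ (fun x => Gm p q (y * (k / x))) x :=
      DifferentiableAt.comp x (g := Gm p q) (f := fun x => y * (k / x))
        (differentiableAt_Gm hp1 hq1 (mul_ne_zero hy (hs0 hx.1)) (norm_mul_lt hy1 (hsn hx.1)))
        ((hkd hx.1).const_mul _)
    have g3 : DifferentiableAt ℂ (fun x => Gm p q (x * (k / x))) x :=
      DifferentiableAt.comp x (g := Gm p q) (f := fun x => x * (k / x))
        (differentiableAt_Gm hp1 hq1 (mul_ne_zero (hx0 hx.1) (hs0 hx.1)) (norm_mul_lt hx.2 (hsn hx.1)))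
        (differentiableAt_id.mul (hkd hx.1))
    unfold B6
    refine DifferentiableAt.mul (DifferentiableAt.mul (DifferentiableAt.mul (DifferentiableAt.mul ?_ ?_) ?_) ?_) ?_
    · exact ((((g1 hb hb1).mul (g1 hc hc1)).mul (g1 hd hd1)).mul (g1 hf hf1)).mul g3
    · exact (g2 hb hb1).const_mul _
    · exact (g2 hc hc1).const_mul _
    · exact (g2 hd hd1).const_mul _
    · exact g2 hf hf1
  · intro x hx
    have := hx0 hx.1
    exact B6_ne hp1 hq1 (hx0 hx.1) hb hc hd hf (hs0 hx.1) hx.2 hb1 hc1 hd1 hf1 (hsn hx.1)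
      (by rw [hk]; field_simp)

lemma const_of_qper {q : ℂ} {k : ℝ} (hq1 : ‖q‖ < 1) (hk0 : 0 ≤ k) (hk : k < ‖q‖) (g : ℂ → ℂ)
    (hd : DifferentiableOn ℂ g {x | k < ‖x‖ ∧ ‖x‖ < 1})
    (hg : ∀ x, k < ‖q * x‖ → ‖x‖ < 1 → g (q * x) = g x) {x y : ℂ}
    (hx : ‖q‖ ≤ ‖x‖) (hx1 : ‖x‖ < 1) (hy : ‖q‖ ≤ ‖y‖) (hy1 : ‖y‖ < 1) : g x = g y := by
  have hqn : 0 < ‖q‖ := hk0.trans_lt hk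
  have hq0 : q ≠ 0 := norm_pos_iff.1 hqn
  obtain ⟨ρ, h1, hρ1⟩ := exists_between (max_lt hq1 ((div_lt_one hqn).2 hk))
  rw [max_lt_iff, div_lt_iff₀ hqn] at h1
  obtain ⟨hqρ, hkρ⟩ := h1
  have hρ0 : 0 < ρ := hqn.trans hqρ
  set ρ1 := max k (‖q‖ ^ 2 * ρ) with hrhoD
  have hrhoQ : ρ1 < ρ * ‖q‖ := by
    rw [hrhoD, max_lt_iff]; refine ⟨hkρ, ?_⟩
    have : ‖q‖ * (‖q‖ * ρ) < 1 * (‖q‖ * ρ) := by gcongr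
    nlinarith
  set U := {x : ℂ | ρ1 < ‖x‖ ∧ ‖x‖ < 1} with hU
  set K := {x : ℂ | ρ * ‖q‖ ≤ ‖x‖ ∧ ‖x‖ ≤ ρ} with hK
  have hKU : K ⊆ U := fun z hz => ⟨hrhoQ.trans_le hz.1, hz.2.trans_lt hρ1⟩
  have hUsub : U ⊆ {x | k < ‖x‖ ∧ ‖x‖ < 1} := fun z hz => ⟨(le_max_left _ _).trans_lt hz.1, hz.2⟩
  have hKc : IsCompact K := by
    refine (isCompact_closedBall (0:ℂ) ρ).of_isClosed_subset ?_ ?_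
    · exact (isClosed_le continuous_const continuous_norm).inter
        (isClosed_le continuous_norm continuous_const)
    · intro z hz; simpa using hz.2
  have hKne : K.Nonempty := by
    refine ⟨(ρ : ℂ), ?_, ?_⟩ <;> simp only [Complex.norm_real, Real.norm_of_nonneg hρ0.le]
    · nlinarith
    · exact le_rfl
  have hdU := hd.mono hUsub
  obtain ⟨m, hmK, hm⟩ := hKc.exists_isMaxOn hKne ((hdU.continuousOn.mono hKU).norm)
  have hmax : IsMaxOn (norm ∘ g) U m := by
    intro z hz
    change ‖g z‖ ≤ ‖g m‖
    by_cases c1 : ‖z‖ ≤ ρ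
    · by_cases c2 : ρ * ‖q‖ ≤ ‖z‖
      · exact hm ⟨c2, c1⟩
      · push Not at c2
        have hzq : ‖z / q‖ = ‖z‖ / ‖q‖ := norm_div _ _
        have e : q * (z / q) = z := mul_div_cancel₀ z hq0
        have a1 : ‖z / q‖ ≤ ρ := by rw [hzq, div_le_iff₀ hqn]; exact c2.le
        have a2 : ρ * ‖q‖ ≤ ‖z / q‖ := by
          rw [hzq, le_div_iff₀ hqn]
          have := (le_max_right k (‖q‖ ^ 2 * ρ)).trans_lt hz.1
          nlinarith
        have := hg (z / q) (by rw [e]; exact (hUsub hz).1) (a1.trans_lt hρ1)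
        rw [e] at this
        rw [this]
        exact hm ⟨a2, a1⟩
    · push Not at c1
      have hzq : ‖q * z‖ = ‖q‖ * ‖z‖ := norm_mul _ _
      have a1 : ‖q * z‖ ≤ ρ := by
        rw [hzq]; have := hz.2; nlinarith
      have a2 : ρ * ‖q‖ ≤ ‖q * z‖ := by rw [hzq]; nlinarith
      rw [← hg z (hkρ.trans_le a2) hz.2]
      exact hm ⟨a2, a1⟩
  have hρ10 : 0 ≤ ρ1 := hk0.trans (le_max_left _ _)
  have key := Complex.eqOn_of_isPreconnected_of_isMaxOn_norm
    (isPreconnected_annulus ρ1 1 hρ10) (isOpen_annulus ρ1 1) hdU (hKU hmK) hmax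
  have hq' : ρ1 < ‖q‖ := hrhoQ.trans (by nlinarith)
  have k1 := key (show x ∈ U from ⟨hq'.trans_le hx, hx1⟩)
  have k2 := key (show y ∈ U from ⟨hq'.trans_le hy, hy1⟩)
  exact k1.trans k2.symm

lemma R5_move {p q : ℂ} (hp0 : p ≠ 0) (hp1 : ‖p‖ < 1) (hq0 : q ≠ 0) (hq1 : ‖q‖ < 1)
    {b c d f x y : ℂ} (hb1 : ‖b‖ < 1) (hc1 : ‖c‖ < 1) (hd1 : ‖d‖ < 1) (hf1 : ‖f‖ < 1)
    (hv : ‖p‖ < ‖b * c * d * f‖)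
    (hx : ‖q‖ ≤ ‖x‖) (hx1 : ‖x‖ < 1) (hy : ‖q‖ ≤ ‖y‖) (hy1 : ‖y‖ < 1) :
    R5 p q x b c d f = R5 p q y b c d f := by
  have hne : b * c * d * f ≠ 0 := norm_pos_iff.1 ((norm_nonneg _).trans_lt hv)
  have hb : b ≠ 0 := by rintro rfl; simp at hne
  have hc : c ≠ 0 := by rintro rfl; simp at hne
  have hd : d ≠ 0 := by rintro rfl; simp at hne
  have hf : f ≠ 0 := by rintro rfl; simp at hne
  have hn := norm_pos_iff.2 hne
  have hqn := norm_pos_iff.2 hq0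
  refine const_of_qper hq1 (norm_nonneg (p * q / (b * c * d * f))) ?_ (fun x => R5 p q x b c d f)
    (R5_diff hp0 hp1 hq0 hq1 hb hc hd hf hb1 hc1 hd1 hf1) ?_ hx hx1 hy hy1
  · rw [norm_div, norm_mul, div_lt_iff₀ hn]; nlinarith
  · intro x h1 h2
    have hx0 : x ≠ 0 := by rintro rfl; rw [mul_zero, norm_zero] at h1; linarith [norm_nonneg (p * q / (b * c * d * f))]
    refine R5_q hp0 hp1 hq0 hq1 hx0 hb hc hd hf h2 hb1 hc1 hd1 hf1 ?_
    rw [norm_div, div_lt_iff₀ hn, norm_mul, norm_mul] at h1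
    rw [show x * b * c * d * f = x * (b * c * d * f) by ring, norm_mul]
    have : ‖q‖ * ‖p‖ < ‖q‖ * (‖x‖ * ‖b * c * d * f‖) := by linarith
    exact lt_of_mul_lt_mul_left this hqn.le

lemma R5_ext {p q : ℂ} (hp0 : p ≠ 0) (hp1 : ‖p‖ < 1) (hq0 : q ≠ 0) (hq1 : ‖q‖ < 1) {r : ℝ} {κ : ℂ}
    (hr1 : r < 1)
    {b c d f : ℂ} (hb1 : ‖b‖ < 1) (hc1 : ‖c‖ < 1) (hd1 : ‖d‖ < 1) (hf1 : ‖f‖ < 1)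
    (h : ∀ x, r < ‖x‖ → ‖x‖ < 1 → ‖p * q‖ < ‖x * b * c * d * f‖ → R5 p q x b c d f = κ)
    {x : ℂ} (hx1 : ‖x‖ < 1) (hv : ‖p * q‖ < ‖x * b * c * d * f‖) : R5 p q x b c d f = κ := by
  have hne : x * b * c * d * f ≠ 0 := norm_pos_iff.1 ((norm_nonneg _).trans_lt hv)
  have hx : x ≠ 0 := by rintro rfl; simp at hne
  have hb : b ≠ 0 := by rintro rfl; simp at hne
  have hc : c ≠ 0 := by rintro rfl; simp at hne
  have hd : d ≠ 0 := by rintro rfl; simp at hne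
  have hf : f ≠ 0 := by rintro rfl; simp at hne
  have hn : 0 < ‖b * c * d * f‖ := norm_pos_iff.2 (by positivity)
  set k := ‖p * q / (b * c * d * f)‖ with hk
  have hkx (z : ℂ) : k < ‖z‖ ↔ ‖p * q‖ < ‖z * b * c * d * f‖ := by
    rw [hk, norm_div, div_lt_iff₀ hn, ← norm_mul, show z * (b * c * d * f) = z * b * c * d * f by ring]
  have hk1 : k < 1 := ((hkx x).2 hv).trans hx1
  have hUo := isOpen_annulus k 1
  have hA := (R5_diff hp0 hp1 hq0 hq1 hb hc hd hf hb1 hc1 hd1 hf1).analyticOnNhd hUo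
  obtain ⟨ρ, hρ, hρ1⟩ := exists_between (max_lt hr1 hk1)
  rw [max_lt_iff] at hρ
  have hk0 : 0 ≤ k := norm_nonneg _
  have hρ0 : 0 ≤ ρ := hk0.trans hρ.2.le
  have hρn : ‖(ρ : ℂ)‖ = ρ := by simp [abs_of_nonneg hρ0]
  have := hA.eqOn_of_preconnected_of_eventuallyEq (analyticOnNhd_const (v := κ))
    (isPreconnected_annulus k 1 hk0) (z₀ := (ρ : ℂ)) ⟨by rw [hρn]; exact hρ.2, by rw [hρn]; exact hρ1⟩ ?_
  · exact this ⟨(hkx x).2 hv, hx1⟩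
  · have o := (isOpen_annulus (max r k) 1).mem_nhds (x := (ρ : ℂ))
      ⟨by rw [hρn]; exact max_lt hρ.1 hρ.2, by rw [hρn]; exact hρ1⟩
    filter_upwards [o] with z hz
    have h1 := max_lt_iff.1 hz.1
    exact h z h1.1 hz.2 ((hkx z).1 h1.2)

lemma exists_r {m : ℝ} (hm : m < 1) : ∃ r : ℝ, 0 < r ∧ r < 1 ∧ m < r ^ 4 ∧ m < r := by
  have h1 : Tendsto (fun r : ℝ => r ^ 4) (𝓝[<] 1) (𝓝 1) := by
    have : ContinuousAt (fun r : ℝ => r ^ 4) 1 := by fun_prop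
    have h2 := this.tendsto.mono_left (nhdsWithin_le_nhds (s := Set.Iio 1))
    simpa using h2
  have h2 : Tendsto (fun r : ℝ => r) (𝓝[<] 1) (𝓝 1) := nhdsWithin_le_nhds
  obtain ⟨r, h⟩ := ((h1.eventually (lt_mem_nhds hm)).and ((h2.eventually (lt_mem_nhds hm)).and
    ((h2.eventually (lt_mem_nhds one_pos)).and self_mem_nhdsWithin))).exists
  exact ⟨r, h.2.2.1, h.2.2.2, h.1, h.2.1⟩

lemma R5_const {p q : ℂ} (hp0 : p ≠ 0) (hp1 : ‖p‖ < 1) (hq0 : q ≠ 0) (hq1 : ‖q‖ < 1) :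
    ∃ κ : ℂ, ∀ a b c d f : ℂ, ‖a‖ < 1 → ‖b‖ < 1 → ‖c‖ < 1 → ‖d‖ < 1 → ‖f‖ < 1 →
      ‖p * q‖ < ‖a * b * c * d * f‖ → R5 p q a b c d f = κ := by
  obtain ⟨r, hr0, hr1, h4, hr⟩ := exists_r (max_lt hp1 hq1)
  have hpr : ‖p‖ < r ^ 4 := (le_max_left _ _).trans_lt h4
  have hqr : ‖q‖ < r := (le_max_right _ _).trans_lt hr
  obtain ⟨ρ, hρ, hρ1⟩ := exists_between hr1
  have hw : ‖(ρ : ℂ)‖ = ρ := by simp [abs_of_nonneg (hr0.trans hρ).le]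
  set w : ℂ := (ρ : ℂ) with hwd
  have hw1 : ‖w‖ < 1 := by rw [hw]; exact hρ1
  have hwr : r < ‖w‖ := by rw [hw]; exact hρ
  have mv {b c d f x y : ℂ} (hb : r < ‖b‖) (hc : r < ‖c‖) (hd : r < ‖d‖) (hf : r < ‖f‖)
      (hx : r < ‖x‖) (hy : r < ‖y‖)
      (hb1 : ‖b‖ < 1) (hc1 : ‖c‖ < 1) (hd1 : ‖d‖ < 1) (hf1 : ‖f‖ < 1)
      (hx1 : ‖x‖ < 1) (hy1 : ‖y‖ < 1) : R5 p q x b c d f = R5 p q y b c d f := by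
    refine R5_move hp0 hp1 hq0 hq1 hb1 hc1 hd1 hf1 (hpr.trans ?_) (hqr.trans hx).le hx1
      (hqr.trans hy).le hy1
    rw [norm_mul, norm_mul, norm_mul]
    calc r ^ 4 = r * r * r * r := by ring
      _ < ‖b‖ * ‖c‖ * ‖d‖ * ‖f‖ := by gcongr
  refine ⟨R5 p q w w w w w, ?_⟩
  have H0 (a b c d f : ℂ) (ha : r < ‖a‖) (hb : r < ‖b‖) (hc : r < ‖c‖) (hd : r < ‖d‖) (hf : r < ‖f‖)
      (ha1 : ‖a‖ < 1) (hb1 : ‖b‖ < 1) (hc1 : ‖c‖ < 1) (hd1 : ‖d‖ < 1) (hf1 : ‖f‖ < 1) :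
      R5 p q a b c d f = R5 p q w w w w w := by
    rw [mv hb hc hd hf ha hwr hb1 hc1 hd1 hf1 ha1 hw1,
      R5_swap12, mv hwr hc hd hf hb hwr hw1 hc1 hd1 hf1 hb1 hw1,
      R5_rot3, mv hwr hwr hd hf hc hwr hw1 hw1 hd1 hf1 hc1 hw1,
      R5_rot4, mv hwr hwr hwr hf hd hwr hw1 hw1 hw1 hf1 hd1 hw1,
      R5_rot5, mv hwr hwr hwr hwr hf hwr hw1 hw1 hw1 hw1 hf1 hw1]
  generalize R5 p q w w w w w = κ at *
  have H1 (a b c d f : ℂ) (hb : r < ‖b‖) (hc : r < ‖c‖) (hd : r < ‖d‖) (hf : r < ‖f‖)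
      (ha1 : ‖a‖ < 1) (hb1 : ‖b‖ < 1) (hc1 : ‖c‖ < 1) (hd1 : ‖d‖ < 1) (hf1 : ‖f‖ < 1)
      (hv : ‖p * q‖ < ‖a * b * c * d * f‖) : R5 p q a b c d f = κ :=
    R5_ext hp0 hp1 hq0 hq1 hr1 hb1 hc1 hd1 hf1
      (fun x hx hx1 _ => H0 x b c d f hx hb hc hd hf hx1 hb1 hc1 hd1 hf1) ha1 hv
  have H2 (a b c d f : ℂ) (hc : r < ‖c‖) (hd : r < ‖d‖) (hf : r < ‖f‖)
      (ha1 : ‖a‖ < 1) (hb1 : ‖b‖ < 1) (hc1 : ‖c‖ < 1) (hd1 : ‖d‖ < 1) (hf1 : ‖f‖ < 1)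
      (hv : ‖p * q‖ < ‖a * b * c * d * f‖) : R5 p q a b c d f = κ := by
    rw [R5_swap12]
    refine R5_ext hp0 hp1 hq0 hq1 hr1 ha1 hc1 hd1 hf1
      (fun x hx hx1 h => ?_) hb1 (by rwa [mul_comm b a])
    rw [R5_swap12]
    exact H1 a x c d f hx hc hd hf ha1 hx1 hc1 hd1 hf1 (by rwa [mul_comm a x])
  have H3 (a b c d f : ℂ) (hd : r < ‖d‖) (hf : r < ‖f‖)
      (ha1 : ‖a‖ < 1) (hb1 : ‖b‖ < 1) (hc1 : ‖c‖ < 1) (hd1 : ‖d‖ < 1) (hf1 : ‖f‖ < 1)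
      (hv : ‖p * q‖ < ‖a * b * c * d * f‖) : R5 p q a b c d f = κ := by
    have e (x : ℂ) : x * a * b * d * f = a * b * x * d * f := by ring
    rw [R5_rot3]
    refine R5_ext hp0 hp1 hq0 hq1 hr1 ha1 hb1 hd1 hf1 (fun x hx hx1 h => ?_) hc1 (by rwa [e])
    rw [← R5_rot3]
    exact H2 a b x d f hx hd hf ha1 hb1 hx1 hd1 hf1 (by rwa [← e])
  have H4 (a b c d f : ℂ) (hf : r < ‖f‖)
      (ha1 : ‖a‖ < 1) (hb1 : ‖b‖ < 1) (hc1 : ‖c‖ < 1) (hd1 : ‖d‖ < 1) (hf1 : ‖f‖ < 1)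
      (hv : ‖p * q‖ < ‖a * b * c * d * f‖) : R5 p q a b c d f = κ := by
    have e (x : ℂ) : x * a * b * c * f = a * b * c * x * f := by ring
    rw [R5_rot4]
    refine R5_ext hp0 hp1 hq0 hq1 hr1 ha1 hb1 hc1 hf1 (fun x hx hx1 h => ?_) hd1 (by rwa [e])
    rw [← R5_rot4]
    exact H3 a b c x f hx hf ha1 hb1 hc1 hx1 hf1 (by rwa [← e])
  intro a b c d f ha1 hb1 hc1 hd1 hf1 hv
  have e (x : ℂ) : x * a * b * c * d = a * b * c * d * x := by ring
  rw [R5_rot5]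
  refine R5_ext hp0 hp1 hq0 hq1 hr1 ha1 hb1 hc1 hd1 (fun x hx hx1 h => ?_) hf1 (by rwa [e])
  rw [← R5_rot5]
  exact H4 a b c d x hx ha1 hb1 hc1 hd1 hx1 (by rwa [← e])

noncomputable def kr (r u : ℝ) : ℝ := (1 - r ^ 4) / ‖1 + (r : ℂ) ^ 2 * eI u ^ 2‖ ^ 2

lemma kr_den {r : ℝ} (hr0 : 0 ≤ r) (u : ℝ) :
    1 - r ^ 2 ≤ ‖1 + (r : ℂ) ^ 2 * eI u ^ 2‖ := by
  have h := norm_sub_norm_le (1 : ℂ) (-((r : ℂ) ^ 2 * eI u ^ 2))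
  simpa [norm_eI] using h

lemma kr_den_pos {r : ℝ} (hr0 : 0 ≤ r) (hr1 : r < 1) (u : ℝ) :
    0 < ‖1 + (r : ℂ) ^ 2 * eI u ^ 2‖ := by
  have : r ^ 2 < 1 := by nlinarith
  linarith [kr_den hr0 u]

lemma kr_cont {r : ℝ} (hr0 : 0 ≤ r) (hr1 : r < 1) : Continuous (kr r) := by
  have := cont_eI
  have h2 (u : ℝ) : ‖1 + (r : ℂ) ^ 2 * eI u ^ 2‖ ^ 2 ≠ 0 := (pow_pos (kr_den_pos hr0 hr1 u) 2).ne'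
  unfold kr
  fun_prop (disch := exact h2 _)

lemma kr_nonneg {r : ℝ} (hr0 : 0 ≤ r) (hr1 : r < 1) (u : ℝ) : 0 ≤ kr r u := by
  unfold kr
  have : r ^ 4 ≤ 1 := pow_le_one₀ hr0 hr1.le
  have : 0 ≤ 1 - r ^ 4 := by linarith
  positivity

lemma kr_bound {r : ℝ} (hr0 : 0 ≤ r) (hr1 : r < 1) (u : ℝ) :
    kr r u * ‖1 + eI u ^ 2‖ ^ 2 ≤ 4 * (1 - r ^ 4) := by
  have hpos := kr_den_pos hr0 hr1 u
  have h1 := kr_den hr0 u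
  have h2 : ‖1 + eI u ^ 2‖ ≤ 2 * ‖1 + (r : ℂ) ^ 2 * eI u ^ 2‖ := by
    have : 1 + eI u ^ 2 = (1 + (r : ℂ) ^ 2 * eI u ^ 2) + (1 - (r : ℂ) ^ 2) * eI u ^ 2 := by ring
    rw [this]
    refine (norm_add_le _ _).trans ?_
    have : ‖(1 - (r : ℂ) ^ 2) * eI u ^ 2‖ = 1 - r ^ 2 := by
      rw [norm_mul, norm_pow, norm_eI, one_pow, mul_one]
      have : (1 - (r : ℂ) ^ 2) = ((1 - r ^ 2 : ℝ) : ℂ) := by push_cast; ring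
      rw [this, Complex.norm_real, Real.norm_of_nonneg (by nlinarith)]
    linarith
  have h4 : r ^ 4 ≤ 1 := pow_le_one₀ hr0 hr1.le
  unfold kr
  rw [div_mul_eq_mul_div, div_le_iff₀ (by positivity)]
  have h3 : ‖1 + eI u ^ 2‖ ^ 2 ≤ (2 * ‖1 + (r : ℂ) ^ 2 * eI u ^ 2‖) ^ 2 := by gcongr
  have : (1 - r ^ 4) * ‖1 + eI u ^ 2‖ ^ 2 ≤ (1 - r ^ 4) * (2 * ‖1 + (r : ℂ) ^ 2 * eI u ^ 2‖) ^ 2 :=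
    mul_le_mul_of_nonneg_left h3 (by linarith)
  linarith

lemma kr_eq {r : ℝ} (hr0 : 0 ≤ r) (hr1 : r < 1) (u : ℝ) :
    kr r u = 2 * (1 / (1 + (r : ℂ) ^ 2 * eI u ^ 2)).re - 1 := by
  have hpos := kr_den_pos hr0 hr1 u
  have hx : ‖(r : ℂ) ^ 2 * eI u ^ 2‖ = r ^ 2 := by simp [norm_eI]
  unfold kr
  have h2 : Complex.normSq ((r : ℂ) ^ 2 * eI u ^ 2) = r ^ 4 := by
    rw [Complex.normSq_eq_norm_sq, hx]; ring
  generalize (r : ℂ) ^ 2 * eI u ^ 2 = x at *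
  rw [one_div, Complex.inv_re, ← Complex.normSq_eq_norm_sq, ← h2]
  have h3 : Complex.normSq (1 + x) ≠ 0 := by
    rw [Complex.normSq_eq_norm_sq]; positivity
  field_simp
  simp [Complex.normSq_apply]
  ring

lemma kr_int {r : ℝ} (hr0 : 0 ≤ r) (hr1 : r < 1) :
    ∫ u in (0:ℝ)..(2 * Real.pi), kr r u = 2 * Real.pi := by
  have hden (u : ℝ) : 1 + (r : ℂ) ^ 2 * eI u ^ 2 ≠ 0 := norm_pos_iff.1 (kr_den_pos hr0 hr1 u)
  have hmv : ∫ u in (0:ℝ)..(2 * Real.pi), 1 / (1 + (r : ℂ) ^ 2 * eI u ^ 2) = ((2 * Real.pi : ℝ) : ℂ) := by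
    have h := DiffContOnCl.circleAverage (f := fun z : ℂ => 1 / (1 + (r : ℂ) ^ 2 * z ^ 2))
      (c := 0) (R := 1) ?_
    · rw [circleAverage_def] at h
      simp only [circleMap, zero_add, ofReal_one, one_mul] at h
      have hpi : (2 * Real.pi : ℝ) ≠ 0 := by positivity
      rw [inv_smul_eq_iff₀ hpi] at h
      simpa [eI] using h
    · refine DifferentiableOn.diffContOnCl fun z hz => DifferentiableAt.differentiableWithinAt ?_
      have hz1 : ‖z‖ ≤ 1 := by
        simpa using Metric.closure_ball_subset_closedBall hz
      have : 1 + (r : ℂ) ^ 2 * z ^ 2 ≠ 0 := by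
        have : 1 - -((r : ℂ) ^ 2 * z ^ 2) ≠ 0 := by
          apply one_sub_ne_zero_of_norm
          rw [norm_neg, norm_mul, norm_pow, norm_pow, Complex.norm_real, Real.norm_of_nonneg hr0]
          have : ‖z‖ ^ 2 ≤ 1 := pow_le_one₀ (norm_nonneg _) hz1
          nlinarith
        simpa using this
      fun_prop (disch := assumption)
  have hc : Continuous (fun u => 1 / (1 + (r : ℂ) ^ 2 * eI u ^ 2)) := by
    have := cont_eI
    fun_prop (disch := exact hden _)
  have hre : ∫ u in (0:ℝ)..(2 * Real.pi), (1 / (1 + (r : ℂ) ^ 2 * eI u ^ 2)).re = 2 * Real.pi := by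
    have := Complex.reCLM.intervalIntegral_comp_comm (hc.intervalIntegrable (μ := MeasureTheory.volume) 0 (2 * Real.pi))
    rw [hmv] at this
    simpa only [Complex.reCLM_apply, Complex.ofReal_re] using this
  simp_rw [kr_eq hr0 hr1]
  rw [intervalIntegral.integral_sub, intervalIntegral.integral_const_mul, hre]
  · simp; ring
  · exact (continuous_const.mul (Complex.continuous_re.comp hc)).intervalIntegrable _ _
  · exact intervalIntegrable_const

lemma conc_bound (f : ℝ → ℝ → ℂ) (L : ℂ) {r1 : ℝ}
    (hf : ContinuousOn (Function.uncurry f) (Set.Icc r1 1 ×ˢ Set.univ))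
    (hL : ∀ u, eI u ^ 2 = -1 → f 1 u = L) {ε : ℝ} (hε : 0 < ε) :
    ∃ C : ℝ, 0 ≤ C ∧ ∀ r ∈ Set.Icc r1 1, ∀ u ∈ Set.Icc 0 (2 * Real.pi),
      ‖f r u - L‖ ≤ ε + C * ((1 - r) + ‖1 + eI u ^ 2‖ ^ 2) := by
  set S : Set (ℝ × ℝ) := Set.Icc r1 1 ×ˢ Set.Icc 0 (2 * Real.pi) with hS
  have hSc : IsCompact S := isCompact_Icc.prod isCompact_Icc
  have hfS : ContinuousOn (fun y : ℝ × ℝ => ‖f y.1 y.2 - L‖) S :=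
    ((hf.mono (Set.prod_mono le_rfl (Set.subset_univ _))).sub continuousOn_const).norm
  obtain ⟨M, hM⟩ := hSc.exists_bound_of_continuousOn hfS
  set T : Set (ℝ × ℝ) := S ∩ (fun y : ℝ × ℝ => ‖f y.1 y.2 - L‖) ⁻¹' Set.Ici ε with hT
  have hTc : IsCompact T := hSc.of_isClosed_subset
    (hfS.preimage_isClosed_of_isClosed hSc.isClosed isClosed_Ici) Set.inter_subset_left
  set φ : ℝ × ℝ → ℝ := fun y => (1 - y.1) + ‖1 + eI y.2 ^ 2‖ ^ 2 with hφ
  have hφc : Continuous φ := by have := cont_eI; fun_prop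
  have hφ0 : ∀ y ∈ S, 0 ≤ φ y := by
    intro y hy
    have : y.1 ≤ 1 := hy.1.2
    simp only [hφ]
    have : 0 ≤ 1 - y.1 := by linarith
    positivity
  have hφT : ∃ c : ℝ, 0 < c ∧ ∀ y ∈ T, c ≤ φ y := by
    rcases T.eq_empty_or_nonempty with h | h
    · exact ⟨1, one_pos, by simp [h]⟩
    · obtain ⟨m, hm, hmin⟩ := hTc.exists_isMinOn h hφc.continuousOn
      refine ⟨φ m, ?_, fun y hy => hmin hy⟩
      refine lt_of_le_of_ne (hφ0 m hm.1) fun h0 => ?_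
      have h1 : 0 ≤ 1 - m.1 := by have : m.1 ≤ 1 := hm.1.1.2; linarith
      have h2 : 0 ≤ ‖1 + eI m.2 ^ 2‖ ^ 2 := by positivity
      have h0' : (1 - m.1) + ‖1 + eI m.2 ^ 2‖ ^ 2 = 0 := h0.symm
      have h3 : m.1 = 1 := by linarith
      have h4 : ‖1 + eI m.2 ^ 2‖ ^ 2 = 0 := by linarith
      have h5 : 1 + eI m.2 ^ 2 = 0 := by simpa using h4
      have h6 := hL m.2 (by linear_combination h5)
      have h7 : ε ≤ ‖f m.1 m.2 - L‖ := hm.2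
      rw [h3, h6, sub_self, norm_zero] at h7
      linarith
  obtain ⟨c, hc, hcT⟩ := hφT
  refine ⟨|M| / c, by positivity, fun r hr u hu => ?_⟩
  have hyS : (r, u) ∈ S := ⟨hr, hu⟩
  have hp := hφ0 _ hyS
  have hp2 : 0 ≤ |M| / c * ((1 - r) + ‖1 + eI u ^ 2‖ ^ 2) := mul_nonneg (by positivity) hp
  by_cases h : ‖f r u - L‖ ≤ ε
  · linarith
  · push Not at h
    have h1 := hcT (r, u) ⟨hyS, h.le⟩
    have h2 := hM _ hyS
    simp only [norm_norm] at h2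
    have : |M| / c * c ≤ |M| / c * ((1 - r) + ‖1 + eI u ^ 2‖ ^ 2) :=
      mul_le_mul_of_nonneg_left h1 (by positivity)
    rw [div_mul_cancel₀ _ hc.ne'] at this
    linarith [le_abs_self M]

lemma conc (f : ℝ → ℝ → ℂ) (L : ℂ) {r1 : ℝ} (hr0 : 0 ≤ r1) (hr1 : r1 < 1)
    (hf : ContinuousOn (Function.uncurry f) (Set.Icc r1 1 ×ˢ Set.univ))
    (hL : ∀ u, eI u ^ 2 = -1 → f 1 u = L) :
    Tendsto (fun r => ∫ u in (0:ℝ)..(2 * Real.pi), f r u * (kr r u : ℂ)) (𝓝[<] 1)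
      (𝓝 (2 * Real.pi * L)) := by
  have hpi : 0 < 2 * Real.pi := by positivity
  rw [Metric.tendsto_nhds]
  intro ε hε
  obtain ⟨C, hC0, hC⟩ := conc_bound f L hf hL (ε := ε / (8 * Real.pi)) (by positivity)
  have hlim : Tendsto (fun r : ℝ => 2 * Real.pi * (C * (1 - r) + 4 * C * (1 - r ^ 4))) (𝓝[<] 1) (𝓝 0) := by
    have : ContinuousAt (fun r : ℝ => 2 * Real.pi * (C * (1 - r) + 4 * C * (1 - r ^ 4))) 1 := by fun_prop
    have h2 := this.tendsto.mono_left (nhdsWithin_le_nhds (s := Set.Iio 1))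
    simpa using h2
  have e1 := hlim.eventually (gt_mem_nhds (half_pos hε))
  have e2 : ∀ᶠ r in 𝓝[<] (1:ℝ), r1 < r := (nhdsWithin_le_nhds) (lt_mem_nhds hr1)
  filter_upwards [e1, e2, self_mem_nhdsWithin] with r h1 h2 h3
  have h3 : r < 1 := h3
  have hr : 0 ≤ r := hr0.trans h2.le
  have hfc : Continuous (f r) := by
    rw [← continuousOn_univ]
    exact hf.comp (f := fun u : ℝ => (r, u)) (by fun_prop) (fun u _ => ⟨⟨h2.le, h3.le⟩, trivial⟩)
  have hkc := kr_cont hr h3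
  have hkc' : Continuous (fun u => (kr r u : ℂ)) := Complex.continuous_ofReal.comp hkc
  have hLint : ∫ u in (0:ℝ)..(2 * Real.pi), L * (kr r u : ℂ) = 2 * Real.pi * L := by
    rw [intervalIntegral.integral_const_mul, intervalIntegral.integral_ofReal, kr_int hr h3]
    push_cast; ring
  rw [dist_eq_norm, ← hLint, ← intervalIntegral.integral_sub
    (by exact (hfc.mul hkc').intervalIntegrable _ _)
    (by exact (continuous_const.mul hkc').intervalIntegrable _ _)]
  have hb : ∀ u ∈ Set.Icc 0 (2 * Real.pi), ‖f r u * (kr r u : ℂ) - L * (kr r u : ℂ)‖ ≤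
      (ε / (8 * Real.pi) + C * (1 - r)) * kr r u + C * (4 * (1 - r ^ 4)) := by
    intro u hu
    have hk := kr_nonneg hr h3 u
    rw [← sub_mul, norm_mul, Complex.norm_real, Real.norm_of_nonneg hk]
    have := mul_le_mul_of_nonneg_right (hC r ⟨h2.le, h3.le⟩ u hu) hk
    have h5 := mul_le_mul_of_nonneg_left (kr_bound hr h3 u) hC0
    nlinarith
  have hcc : Continuous (fun u => (ε / (8 * Real.pi) + C * (1 - r)) * kr r u + C * (4 * (1 - r ^ 4))) := by
    fun_prop
  refine (intervalIntegral.norm_integral_le_of_norm_le hpi.le (.of_forall fun u hu => hb u ⟨hu.1.le, hu.2⟩)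
    (hcc.intervalIntegrable _ _)).trans_lt ?_
  rw [intervalIntegral.integral_add
    (by exact (continuous_const.mul hkc).intervalIntegrable _ _) (by simp),
    intervalIntegral.integral_const_mul, kr_int hr h3, intervalIntegral.integral_const]
  have : ε / (8 * Real.pi) * (2 * Real.pi) = ε / 4 := by field_simp; norm_num
  simp only [sub_zero, smul_eq_mul]
  nlinarith

noncomputable def Gt (p q x : ℂ) : ℂ := PP p q (p * q * x⁻¹) / (qpoch (p * x) p * PP p q (q * x))

lemma Gt_eq {p q : ℂ} (hp1 : ‖p‖ < 1) (hq1 : ‖q‖ < 1) (x : ℂ) :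
    Gm p q x = Gt p q x / (1 - x) := by
  unfold Gm Gt
  rw [PP_right hp1 hq1 x, qpoch_succ hp1 x, div_div]
  congr 1
  ring

lemma norm_mul_lt' {a x : ℂ} (ha : ‖a‖ < 1) (hx : ‖x‖ ≤ 1) : ‖a * x‖ < 1 := by
  rw [norm_mul]; exact mul_lt_one_of_nonneg_of_lt_one_left (norm_nonneg _) ha hx

lemma Gt_contAt {p q : ℂ} (hp1 : ‖p‖ < 1) (hq1 : ‖q‖ < 1) {x : ℂ} (hx : x ≠ 0) (hx1 : ‖x‖ ≤ 1) :
    ContinuousAt (Gt p q) x := by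
  unfold Gt
  have h1 := (differentiable_PP hp1 hq1).continuous
  have h2 := (differentiable_qpoch hp1).continuous
  refine ContinuousAt.div ?_ ?_ (mul_ne_zero (qpoch_ne_zero hp1 (norm_mul_lt' hp1 hx1))
    (PP_ne_zero hp1 hq1 (norm_mul_lt' hq1 hx1)))
  · exact ContinuousAt.comp (g := PP p q) (f := fun x => p * q * x⁻¹) h1.continuousAt
      (continuousAt_const.mul (continuousAt_inv₀ hx))
  · refine ContinuousAt.mul ?_ ?_
    · exact (h2.comp (continuous_const.mul continuous_id)).continuousAt
    · exact (h1.comp (continuous_const.mul continuous_id)).continuousAt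

lemma Gt_one {p q : ℂ} (hp1 : ‖p‖ < 1) (hq1 : ‖q‖ < 1) :
    Gt p q 1 * (qpoch p p * qpoch q q) = 1 := by
  unfold Gt
  have h1 : PP p q (p * q) ≠ 0 := PP_ne_zero hp1 hq1 (norm_mul_lt hp1 hq1)
  have h2 := qpoch_ne_zero hp1 hp1
  have h3 := qpoch_ne_zero hq1 hq1
  rw [inv_one, mul_one, mul_one, mul_one, PP_left hp1 hq1 q]
  field_simp

lemma WW_neg_one {p q : ℂ} (hp1 : ‖p‖ < 1) (hq1 : ‖q‖ < 1) {z : ℂ} (hz : z ^ 2 = -1) :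
    Gt p q (-1) ^ 2 * WW p q z = 4 := by
  have h := inv_Gm_Gm hp1 hq1 (x := -1) (by simp)
  unfold WW
  rw [hz, ← h, inv_neg, inv_one, Gt_eq hp1 hq1]
  have : Gt p q (-1) ≠ 0 := by
    unfold Gt
    refine div_ne_zero (PP_ne_zero hp1 hq1 ?_) (mul_ne_zero (qpoch_ne_zero hp1 (norm_mul_lt' hp1 (by simp)))
      (PP_ne_zero hp1 hq1 (norm_mul_lt' hq1 (by simp))))
    exact norm_mul_lt' (norm_mul_lt hp1 hq1) (by simp)
  field_simp
  norm_num

noncomputable def ff (p q a b : ℂ) (r u : ℝ) : ℂ :=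
  Gt p q (I * r * eI u) * Gt p q (-(I * r) * eI u) * Gt p q (I * r / eI u) * Gt p q (-(I * r) / eI u)
    * (EE p q a (eI u) * EE p q (-a) (eI u) * EE p q (b / r) (eI u) * EE p q (-(b / r)) (eI u)
      * WW p q (eI u))

lemma kr_mul {r : ℝ} (hr0 : 0 < r) (hr1 : r < 1) (u : ℝ) :
    (kr r u : ℂ) = (1 - (r : ℂ) ^ 4) / ((1 - I * r * eI u) * (1 - -(I * r) * eI u)
      * (1 - I * r / eI u) * (1 - -(I * r) / eI u)) := by
  unfold kr
  push_cast
  congr 1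
  have hz := eI_ne u
  have hc : (starRingEnd ℂ) (eI u) = (eI u)⁻¹ := by
    rw [Complex.inv_def, Complex.normSq_eq_norm_sq, norm_eI]; simp
  rw [← Complex.mul_conj']
  simp only [map_add, map_one, map_mul, map_pow, Complex.conj_ofReal, hc]
  have hI : I ^ 2 = -1 := Complex.I_sq
  field_simp
  have e1 : (1 - r * I * eI u) * (1 + r * I * eI u) = 1 + (r : ℂ) ^ 2 * eI u ^ 2 := by
    linear_combination (-(r : ℂ) ^ 2 * eI u ^ 2) * hI
  have e2 : (eI u - r * I) * (eI u + r * I) = eI u ^ 2 + (r : ℂ) ^ 2 := by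
    linear_combination (-(r : ℂ) ^ 2) * hI
  linear_combination (-(eI u - r * I) * (eI u + r * I)) * e1 - (1 + (r : ℂ) ^ 2 * eI u ^ 2) * e2

lemma I6_kr {p q : ℂ} (hp1 : ‖p‖ < 1) (hq1 : ‖q‖ < 1) (a b : ℂ) {r : ℝ} (hr0 : 0 < r) (hr1 : r < 1) :
    (1 - (r : ℂ) ^ 4) * I6 p q (I * r) (-(I * r)) a (-a) (b / r) (-(b / r))
      = ∫ u in (0:ℝ)..(2 * Real.pi), ff p q a b r u * (kr r u : ℂ) := by
  unfold I6
  rw [← intervalIntegral.integral_const_mul]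
  congr 1
  ext u
  rw [kr_mul hr0 hr1]
  unfold ff
  rw [show EE p q (I * r) (eI u) = Gm p q (I * r * eI u) * Gm p q (I * r / eI u) from rfl,
    show EE p q (-(I * r)) (eI u) = Gm p q (-(I * r) * eI u) * Gm p q (-(I * r) / eI u) from rfl,
    Gt_eq hp1 hq1, Gt_eq hp1 hq1, Gt_eq hp1 hq1, Gt_eq hp1 hq1]
  simp only [div_eq_mul_inv, mul_inv]
  ring

lemma ff_cont {p q : ℂ} (hp1 : ‖p‖ < 1) (hq1 : ‖q‖ < 1) {a b : ℂ} (ha : a ≠ 0) (hb : b ≠ 0)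
    (ha1 : ‖a‖ < 1) {r1 : ℝ} (hr0 : 0 < r1) (hb1 : ‖b‖ < r1) :
    ContinuousOn (Function.uncurry (ff p q a b)) (Set.Icc r1 1 ×ˢ Set.univ) := by
  rintro ⟨r, u⟩ ⟨⟨h1, h2⟩, -⟩
  simp only at h1 h2
  refine ContinuousAt.continuousWithinAt ?_
  have hr : 0 < r := hr0.trans_le h1
  have hrc : (r : ℂ) ≠ 0 := by exact_mod_cast hr.ne'
  have hI := Complex.I_ne_zero
  have hz := eI_ne u
  have ce : ContinuousAt (fun y : ℝ × ℝ => eI y.2) (r, u) := (cont_eI.comp continuous_snd).continuousAt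
  have cr : ContinuousAt (fun y : ℝ × ℝ => (y.1 : ℂ)) (r, u) :=
    (Complex.continuous_ofReal.comp continuous_fst).continuousAt
  have cI : ContinuousAt (fun y : ℝ × ℝ => I * (y.1 : ℂ)) (r, u) := continuousAt_const.mul cr
  have cb : ContinuousAt (fun y : ℝ × ℝ => b / (y.1 : ℂ)) (r, u) := continuousAt_const.div cr hrc
  have gt {g : ℝ × ℝ → ℂ} (hg : ContinuousAt g (r, u)) (h0 : g (r, u) ≠ 0) (hn : ‖g (r, u)‖ ≤ 1) :
      ContinuousAt (fun y => Gt p q (g y)) (r, u) :=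
    ContinuousAt.comp (g := Gt p q) (f := g) (Gt_contAt hp1 hq1 h0 hn) hg
  have ee {g : ℝ × ℝ → ℂ} (hg : ContinuousAt g (r, u)) (h0 : g (r, u) ≠ 0) (hn : ‖g (r, u)‖ < 1) :
      ContinuousAt (fun y => EE p q (g y) (eI y.2)) (r, u) :=
    ContinuousAt.comp (g := fun y : ℂ × ℝ => EE p q y.1 (eI y.2)) (f := fun y => (g y, y.2))
      (EE_contAt hp1 hq1 h0 hn) (hg.prodMk continuousAt_snd)
  have hw : ContinuousAt (fun y : ℝ × ℝ => WW p q (eI y.2)) (r, u) :=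
    ((WW_cont hp1 hq1).comp continuous_snd).continuousAt
  have hbr : ‖b / (r : ℂ)‖ < 1 := by
    rw [norm_div, Complex.norm_real, Real.norm_of_nonneg hr.le, div_lt_one hr]; linarith
  have hbr0 : b / (r : ℂ) ≠ 0 := div_ne_zero hb hrc
  have n1 : ‖I * (r : ℂ)‖ ≤ 1 := by simp [abs_of_pos hr, h2]
  have g1 := gt (cI.mul ce) (by simp [hrc, hz]) (by simpa [norm_eI] using n1)
  have g2 := gt (cI.neg.mul ce) (by simp [hrc, hz]) (by simpa [norm_eI] using n1)
  have g3 := gt (cI.div ce hz) (by simp [hrc, hz]) (by simpa [norm_eI] using n1)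
  have g4 := gt (cI.neg.div ce hz) (by simp [hrc, hz]) (by simpa [norm_eI] using n1)
  have e1 := ee (g := fun _ => a) continuousAt_const ha ha1
  have e2 := ee (g := fun _ => -a) continuousAt_const (neg_ne_zero.2 ha) (by simpa using ha1)
  have e3 := ee cb hbr0 hbr
  have e4 := ee cb.neg (neg_ne_zero.2 hbr0) (by simpa using hbr)
  exact (((g1.mul g2).mul g3).mul g4).mul ((((e1.mul e2).mul e3).mul e4).mul hw)

noncomputable def Q4 (p q m : ℂ) : ℂ := Gm p q (I * m) * Gm p q (-(I * m))

lemma EE_Q4 {p q m z : ℂ} (hz : z = I ∨ z = -I) : EE p q m z = Q4 p q m := by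
  unfold EE Q4
  rcases hz with rfl | rfl
  · rw [Complex.div_I, mul_comm m I]
  · rw [div_neg, Complex.div_I, neg_neg, mul_neg, mul_comm m I, mul_comm]

lemma ff_one {p q a b : ℂ} (hp1 : ‖p‖ < 1) (hq1 : ‖q‖ < 1) (u : ℝ) (hu : eI u ^ 2 = -1) :
    ff p q a b 1 u = 4 * Gt p q 1 ^ 2 * (Q4 p q a * Q4 p q (-a) * Q4 p q b * Q4 p q (-b)) := by
  have hW := WW_neg_one hp1 hq1 hu
  have hz : eI u = I ∨ eI u = -I := by
    rw [← Complex.I_sq] at hu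
    exact sq_eq_sq_iff_eq_or_eq_neg.1 hu
  unfold ff
  simp only [Complex.ofReal_one, div_one, mul_one, EE_Q4 hz]
  have hG : Gt p q (I * eI u) * Gt p q (-I * eI u) * Gt p q (I / eI u) * Gt p q (-I / eI u)
      = Gt p q 1 ^ 2 * Gt p q (-1) ^ 2 := by
    have hI := Complex.I_ne_zero
    rcases hz with h | h
    · rw [h, neg_mul, Complex.I_mul_I, neg_neg, neg_div, div_self hI]; ring
    · rw [h, neg_mul, mul_neg, Complex.I_mul_I, neg_neg, neg_div, div_neg, div_self hI, neg_neg]; ring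
  rw [hG]
  linear_combination (Gt p q 1 ^ 2 * (Q4 p q a * Q4 p q (-a) * Q4 p q b * Q4 p q (-b))) * hW

noncomputable def Br (p q a b : ℂ) (r : ℂ) : ℂ :=
  (Gm p q (I * r * a) * Gm p q (I * r * -a) * Gm p q (I * r * (b / r)) * Gm p q (I * r * -(b / r)))
  * (Gm p q (-(I * r) * a) * Gm p q (-(I * r) * -a) * Gm p q (-(I * r) * (b / r))
    * Gm p q (-(I * r) * -(b / r)))
  * (Gm p q (a * -a) * Gm p q (a * (b / r)) * Gm p q (a * -(b / r)))
  * (Gm p q (-a * (b / r)) * Gm p q (-a * -(b / r))) * Gm p q ((b / r) * -(b / r))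

lemma B6_Br {p q : ℂ} (hp1 : ‖p‖ < 1) (hq1 : ‖q‖ < 1) (a b : ℂ) {r : ℝ} (hr0 : 0 < r) (hr1 : r < 1) :
    (1 - (r : ℂ) ^ 4) * B6 p q (I * r) (-(I * r)) a (-a) (b / r) (-(b / r))
      = (1 + (r : ℂ) ^ 2) * Gt p q ((r : ℂ) ^ 2) * Br p q a b r := by
  have h1 : I * r * -(I * r) = (r : ℂ) ^ 2 := by linear_combination (-(r : ℂ) ^ 2) * Complex.I_sq
  have h2 : 1 - (r : ℂ) ^ 2 ≠ 0 := by
    apply one_sub_ne_zero_of_norm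
    rw [norm_pow, Complex.norm_real, Real.norm_of_nonneg hr0.le]
    nlinarith
  have h3 : (1 - (r : ℂ) ^ 4) * Gm p q ((r : ℂ) ^ 2) = (1 + (r : ℂ) ^ 2) * Gt p q ((r : ℂ) ^ 2) := by
    rw [Gt_eq hp1 hq1]; field_simp; ring
  rw [← h3]
  unfold B6 Br
  rw [h1]
  ring

lemma Br_one {p q : ℂ} (hp0 : p ≠ 0) (hq0 : q ≠ 0) (hp1 : ‖p‖ < 1) (hq1 : ‖q‖ < 1) {a b : ℂ}
    (ha : a ^ 2 = p) (hb : b ^ 2 = q) (ha1 : ‖a‖ < 1) (hb1 : ‖b‖ < 1) :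
    Br p q a b 1 = Q4 p q a * Q4 p q (-a) * Q4 p q b * Q4 p q (-b) := by
  have e1 := Gm_refl hp0 hq0 hp1 hq1 (z := a * -a) (w := b * -b) (by rw [← ha, ← hb]; ring)
    (norm_mul_lt ha1 (by simpa using ha1)) (norm_mul_lt hb1 (by simpa using hb1))
  have e2 := Gm_refl hp0 hq0 hp1 hq1 (z := a * b) (w := -a * -b) (by rw [← ha, ← hb]; ring)
    (norm_mul_lt ha1 hb1) (norm_mul_lt (by simpa using ha1) (by simpa using hb1))
  have e3 := Gm_refl hp0 hq0 hp1 hq1 (z := a * -b) (w := -a * b) (by rw [← ha, ← hb]; ring)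
    (norm_mul_lt ha1 (by simpa using hb1)) (norm_mul_lt (by simpa using ha1) hb1)
  unfold Br Q4
  simp only [mul_one, div_one]
  have n1 (x : ℂ) : -I * x = -(I * x) := by ring
  simp only [n1, mul_neg I, neg_neg]
  calc _ = ((Gm p q (I * a) * Gm p q (-(I * a)) * Gm p q (I * b) * Gm p q (-(I * b))) *
      (Gm p q (-(I * a)) * Gm p q (I * a) * Gm p q (-(I * b)) * Gm p q (I * b)))
      * ((Gm p q (a * -a) * Gm p q (b * -b)) * (Gm p q (a * b) * Gm p q (-a * -b))
        * (Gm p q (a * -b) * Gm p q (-a * b))) := by ring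
    _ = _ := by rw [e1, e2, e3]; ring

lemma Br_cont {p q : ℂ} (hp1 : ‖p‖ < 1) (hq1 : ‖q‖ < 1) {a b : ℂ}
    (ha : a ≠ 0) (hb : b ≠ 0) (ha1 : ‖a‖ < 1) (hb1 : ‖b‖ < 1) : ContinuousAt (Br p q a b) 1 := by
  have gm {g : ℂ → ℂ} (hg : ContinuousAt g 1) (h0 : g 1 ≠ 0) (hn : ‖g 1‖ < 1) :
      ContinuousAt (fun y => Gm p q (g y)) 1 :=
    ContinuousAt.comp (g := Gm p q) (f := g) (differentiableAt_Gm hp1 hq1 h0 hn).continuousAt hg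
  have h1 : ContinuousAt (fun r : ℂ => b / r) 1 := continuousAt_const.div continuousAt_id one_ne_zero
  have h2 : ContinuousAt (fun r : ℂ => I * r) 1 := continuousAt_const.mul continuousAt_id
  have ca : ContinuousAt (fun _ : ℂ => a) 1 := continuousAt_const
  have ca' : ContinuousAt (fun _ : ℂ => -a) 1 := continuousAt_const
  have nab : ‖a‖ * ‖b‖ < 1 := by have := norm_mul_lt ha1 hb1; rwa [norm_mul] at this
  have naa : ‖a‖ * ‖a‖ < 1 := by have := norm_mul_lt ha1 ha1; rwa [norm_mul] at this
  have nbb : ‖b‖ * ‖b‖ < 1 := by have := norm_mul_lt hb1 hb1; rwa [norm_mul] at this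
  unfold Br
  refine (((((ContinuousAt.mul (ContinuousAt.mul (ContinuousAt.mul ?_ ?_) ?_) ?_)).mul
    (ContinuousAt.mul (ContinuousAt.mul (ContinuousAt.mul ?_ ?_) ?_) ?_)).mul
    (ContinuousAt.mul (ContinuousAt.mul ?_ ?_) ?_)).mul (ContinuousAt.mul ?_ ?_)).mul ?_
  · exact gm (h2.mul ca) (by simp [ha]) (by simpa using ha1)
  · exact gm (h2.mul ca') (by simp [ha]) (by simpa using ha1)
  · exact gm (h2.mul h1) (by simp [hb]) (by simpa using hb1)
  · exact gm (h2.mul h1.neg) (by simp [hb]) (by simpa using hb1)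
  · exact gm (h2.neg.mul ca) (by simp [ha]) (by simpa using ha1)
  · exact gm (h2.neg.mul ca') (by simp [ha]) (by simpa using ha1)
  · exact gm (h2.neg.mul h1) (by simp [hb]) (by simpa using hb1)
  · exact gm (h2.neg.mul h1.neg) (by simp [hb]) (by simpa using hb1)
  · exact gm (ca.mul ca') (by simp [ha]) (by simpa using naa)
  · exact gm (ca.mul h1) (by simp [ha, hb]) (by simpa using nab)
  · exact gm (ca.mul h1.neg) (by simp [ha, hb]) (by simpa using nab)
  · exact gm (ca'.mul h1) (by simp [ha, hb]) (by simpa using nab)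
  · exact gm (ca'.mul h1.neg) (by simp [ha, hb]) (by simpa using nab)
  · exact gm (h1.mul h1.neg) (by simp [hb]) (by simpa using nbb)

lemma Q4_ne {p q m w : ℂ} (hp1 : ‖p‖ < 1) (hq1 : ‖q‖ < 1) (hm : m ≠ 0) (h : m * w = p * q)
    (hm1 : ‖m‖ < 1) (hw : ‖w‖ < 1) : Q4 p q m ≠ 0 := by
  have := norm_lt_of_mul hm h hw
  unfold Q4
  refine mul_ne_zero (Gm_ne_zero hp1 hq1 ?_ ?_) (Gm_ne_zero hp1 hq1 ?_ ?_)
  · simpa using this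
  · simpa using hm1
  · simpa using this
  · simpa using hm1

lemma I6_eval {p q : ℂ} (hp0 : p ≠ 0) (hp1 : ‖p‖ < 1) (hq0 : q ≠ 0) (hq1 : ‖q‖ < 1)
    {a b c d f s : ℂ} (ha1 : ‖a‖ < 1) (hb1 : ‖b‖ < 1) (hc1 : ‖c‖ < 1) (hd1 : ‖d‖ < 1) (hf1 : ‖f‖ < 1)
    (hs1 : ‖s‖ < 1) (hbal : a * b * c * d * f * s = p * q) :
    qpoch p p * qpoch q q * I6 p q a b c d f s = 4 * Real.pi * B6 p q a b c d f s := by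
  obtain ⟨κ, hκ⟩ := R5_const hp0 hp1 hq0 hq1
  have main {a b c d f s : ℂ} (ha1 : ‖a‖ < 1) (hb1 : ‖b‖ < 1) (hc1 : ‖c‖ < 1) (hd1 : ‖d‖ < 1)
      (hf1 : ‖f‖ < 1) (hs1 : ‖s‖ < 1) (hbal : a * b * c * d * f * s = p * q) :
      I6 p q a b c d f s = κ * B6 p q a b c d f s := by
    have hne : a * b * c * d * f * s ≠ 0 := by rw [hbal]; exact mul_ne_zero hp0 hq0
    have h5 : a * b * c * d * f ≠ 0 := left_ne_zero_of_mul hne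
    have hs : s ≠ 0 := right_ne_zero_of_mul hne
    have h := hκ a b c d f ha1 hb1 hc1 hd1 hf1 (norm_lt_of_mul h5 hbal hs1)
    unfold R5 at h
    have : p * q / (a * b * c * d * f) = s := by
      rw [← hbal]; exact mul_div_cancel_left₀ _ h5
    rw [this, div_eq_iff] at h
    · exact h
    · simp only [mul_ne_zero_iff] at h5
      obtain ⟨⟨⟨⟨ha, hb⟩, hc⟩, hd⟩, hf⟩ := h5
      exact B6_ne hp1 hq1 ha hb hc hd hf hs ha1 hb1 hc1 hd1 hf1 hs1 hbal
  have hκv : κ * (qpoch p p * qpoch q q) = 4 * Real.pi := by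
    obtain ⟨α, hα⟩ := IsAlgClosed.exists_pow_nat_eq p (n := 2) (by norm_num)
    obtain ⟨β, hβ⟩ := IsAlgClosed.exists_pow_nat_eq q (n := 2) (by norm_num)
    have hα0 : α ≠ 0 := by rintro rfl; simp at hα; exact hp0 hα.symm
    have hβ0 : β ≠ 0 := by rintro rfl; simp at hβ; exact hq0 hβ.symm
    have sq1 {x y : ℂ} (h : x ^ 2 = y) (hy : ‖y‖ < 1) : ‖x‖ < 1 := by
      rw [← h, norm_pow] at hy
      by_contra hh
      push Not at hh
      have := one_le_pow₀ hh (n := 2)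
      linarith
    have hα1 := sq1 hα hp1
    have hβ1 := sq1 hβ hq1
    obtain ⟨r1, hr1, hr2⟩ := exists_between hβ1
    have hr0 : 0 < r1 := (norm_nonneg _).trans_lt hr1
    have l1 := conc (ff p q α β) _ hr0.le hr2 (ff_cont hp1 hq1 hα0 hβ0 hα1 hr0 hr1)
      (fun u hu => ff_one hp1 hq1 u hu)
    have l2 : Tendsto (fun r : ℝ => κ * ((1 + (r : ℂ) ^ 2) * Gt p q ((r : ℂ) ^ 2) * Br p q α β r)) (𝓝[<] 1)
        (𝓝 (κ * ((1 + 1) * Gt p q 1 * Br p q α β 1))) := by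
      have c0 : ContinuousAt (fun r : ℝ => (r : ℂ)) 1 := Complex.continuous_ofReal.continuousAt
      have c1 : ContinuousAt (fun r : ℝ => (r : ℂ) ^ 2) 1 := c0.pow 2
      have c2 : ContinuousAt (fun r : ℝ => Gt p q ((r : ℂ) ^ 2)) 1 :=
        ContinuousAt.comp (g := Gt p q) (f := fun r : ℝ => (r : ℂ) ^ 2)
          (Gt_contAt hp1 hq1 (by simp) (by simp)) c1
      have c3 : ContinuousAt (fun r : ℝ => Br p q α β (r : ℂ)) 1 :=
        ContinuousAt.comp (g := Br p q α β) (f := fun r : ℝ => (r : ℂ))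
          (by rw [Complex.ofReal_one]; exact Br_cont hp1 hq1 hα0 hβ0 hα1 hβ1) c0
      have c4 : ContinuousAt (fun r : ℝ => κ * ((1 + (r : ℂ) ^ 2) * Gt p q ((r : ℂ) ^ 2) * Br p q α β r)) 1 :=
        continuousAt_const.mul (((continuousAt_const.add c1).mul c2).mul c3)
      have := c4.tendsto.mono_left (nhdsWithin_le_nhds (s := Set.Iio 1))
      simpa only [Complex.ofReal_one, one_pow] using this
    have hev : (fun r : ℝ => κ * ((1 + (r : ℂ) ^ 2) * Gt p q ((r : ℂ) ^ 2) * Br p q α β r)) =ᶠ[𝓝[<] 1]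
        (fun r : ℝ => ∫ u in (0:ℝ)..(2 * Real.pi), ff p q α β r u * (kr r u : ℂ)) := by
      have e2 : ∀ᶠ r in 𝓝[<] (1:ℝ), r1 < r := (nhdsWithin_le_nhds) (lt_mem_nhds hr2)
      filter_upwards [e2, self_mem_nhdsWithin] with r h2 h3
      have h3 : r < 1 := h3
      have hr : 0 < r := hr0.trans h2
      have hrc : (r : ℂ) ≠ 0 := by exact_mod_cast hr.ne'
      have n1 : ‖I * (r : ℂ)‖ < 1 := by simp [abs_of_pos hr, h3]
      have n2 : ‖β / (r : ℂ)‖ < 1 := by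
        rw [norm_div, Complex.norm_real, Real.norm_of_nonneg hr.le, div_lt_one hr]; linarith
      rw [← I6_kr hp1 hq1 α β hr h3, ← B6_Br hp1 hq1 α β hr h3,
        main n1 (by rwa [norm_neg]) hα1 (by rwa [norm_neg]) n2 (by rwa [norm_neg])]
      · ring
      · rw [← hα, ← hβ]
        field_simp
        linear_combination (-1 : ℂ) * Complex.I_sq
    have hu := tendsto_nhds_unique (l2.congr' hev) l1
    rw [Br_one hp0 hq0 hp1 hq1 hα hβ hα1 hβ1] at hu
    have hG := Gt_one hp1 hq1
    have hG0 : Gt p q 1 ≠ 0 := left_ne_zero_of_mul (by rw [hG]; exact one_ne_zero)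
    have qa : Q4 p q α ≠ 0 := Q4_ne hp1 hq1 hα0 (w := α * q) (by rw [← hα]; ring) hα1 (norm_mul_lt hα1 hq1)
    have qa' : Q4 p q (-α) ≠ 0 := Q4_ne hp1 hq1 (neg_ne_zero.2 hα0) (w := -α * q) (by rw [← hα]; ring)
      (by rwa [norm_neg]) (norm_mul_lt (by rwa [norm_neg]) hq1)
    have qb : Q4 p q β ≠ 0 := Q4_ne hp1 hq1 hβ0 (w := β * p) (by rw [← hβ]; ring) hβ1 (norm_mul_lt hβ1 hp1)
    have qb' : Q4 p q (-β) ≠ 0 := Q4_ne hp1 hq1 (neg_ne_zero.2 hβ0) (w := -β * p) (by rw [← hβ]; ring)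
      (by rwa [norm_neg]) (norm_mul_lt (by rwa [norm_neg]) hp1)
    have hQ : Q4 p q α * Q4 p q (-α) * Q4 p q β * Q4 p q (-β) ≠ 0 :=
      mul_ne_zero (mul_ne_zero (mul_ne_zero qa qa') qb) qb'
    generalize Q4 p q α * Q4 p q (-α) * Q4 p q β * Q4 p q (-β) = Q at hu hQ
    have h1 : κ = 4 * Real.pi * Gt p q 1 := by
      have : (2 * Gt p q 1 * Q) * κ = (2 * Gt p q 1 * Q) * (4 * Real.pi * Gt p q 1) := by
        linear_combination hu
      exact mul_left_cancel₀ (mul_ne_zero (mul_ne_zero two_ne_zero hG0) hQ) this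
    rw [h1]
    linear_combination (4 * (Real.pi : ℂ)) * hG
  rw [main ha1 hb1 hc1 hd1 hf1 hs1 hbal]
  linear_combination (B6 p q a b c d f s) * hκv

theorem elliptic_beta_integral (p q : ℂ) (hp0 : 0 < ‖p‖) (hp1 : ‖p‖ < 1)
    (hq0 : 0 < ‖q‖) (hq1 : ‖q‖ < 1)
    (t : Fin 6 → ℂ) (ht0 : ∀ j, t j ≠ 0) (ht1 : ∀ j, ‖t j‖ < 1)
    (hbal : ∏ j, t j = p * q) :
    (kappa p q * ∫ u in (0:ℝ)..(2 * Real.pi),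
        (∏ j, egamma (t j * Complex.exp (u * Complex.I)) p q *
            egamma (t j * (Complex.exp (u * Complex.I))⁻¹) p q) /
          (egamma (Complex.exp (u * Complex.I) ^ 2) p q *
            egamma ((Complex.exp (u * Complex.I) ^ 2)⁻¹) p q) * Complex.I)
      = ∏ j : Fin 6, ∏ k ∈ Finset.Ioi j, egamma (t j * t k) p q := by
  have hg (z : ℂ) : egamma z p q = Gm p q z := egamma_eq hp1 hq1 z
  rw [Fin.prod_univ_six] at hbal
  have h := I6_eval (norm_pos_iff.1 hp0) hp1 (norm_pos_iff.1 hq0) hq1 (ht1 0) (ht1 1) (ht1 2) (ht1 3)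
    (ht1 4) (ht1 5) hbal
  have hIntg : (∫ u in (0:ℝ)..(2 * Real.pi),
        (∏ j, egamma (t j * Complex.exp (u * Complex.I)) p q *
            egamma (t j * (Complex.exp (u * Complex.I))⁻¹) p q) /
          (egamma (Complex.exp (u * Complex.I) ^ 2) p q *
            egamma ((Complex.exp (u * Complex.I) ^ 2)⁻¹) p q) * Complex.I)
      = I6 p q (t 0) (t 1) (t 2) (t 3) (t 4) (t 5) * Complex.I := by
    rw [intervalIntegral.integral_mul_const]
    congr 1
    unfold I6
    congr 1
    ext u
    rw [show Complex.exp (u * Complex.I) = eI u from rfl, div_eq_mul_one_div]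
    simp only [hg]
    rw [inv_Gm_Gm hp1 hq1 (by rw [norm_pow, norm_eI, one_pow]), Fin.prod_univ_six]
    simp only [← div_eq_mul_inv]
    rfl
  have hrhs : ∏ j : Fin 6, ∏ k ∈ Finset.Ioi j, egamma (t j * t k) p q
      = B6 p q (t 0) (t 1) (t 2) (t 3) (t 4) (t 5) := by
    have i0 : Finset.Ioi (0 : Fin 6) = {1, 2, 3, 4, 5} := by decide
    have i1 : Finset.Ioi (1 : Fin 6) = {2, 3, 4, 5} := by decide
    have i2 : Finset.Ioi (2 : Fin 6) = {3, 4, 5} := by decide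
    have i3 : Finset.Ioi (3 : Fin 6) = {4, 5} := by decide
    have i4 : Finset.Ioi (4 : Fin 6) = {5} := by decide
    have i5 : Finset.Ioi (5 : Fin 6) = ∅ := by decide
    rw [Fin.prod_univ_six, i0, i1, i2, i3, i4, i5]
    simp only [hg]
    repeat rw [Finset.prod_insert (by decide)]
    simp only [Finset.prod_singleton, Finset.prod_empty]
    unfold B6
    ring
  rw [hIntg, hrhs]
  unfold kappa
  have hpi : (Real.pi : ℂ) ≠ 0 := by exact_mod_cast Real.pi_ne_zero
  have hI := Complex.I_ne_zero
  field_simp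
  linear_combination h
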